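/- Let k be a field of characteristic zero, let V ⊂ P_k^n × P_k^m be a reduced closed subscheme, and let (d,e) ∈ N² with d,e ≠ 0. Let f_U be a bihomogeneous form of bidegree (d,e) whose coefficients U_{α,β} are indeterminates. Then there exists a nonempty open subset Ω ⊂ Spec(k[U_{α,β}]) such that for every point p ∈ Ω, with residue field k_p and corresponding form f_p, the scheme V ∩ Z(f_p) ⊆ P^n_{k_p} × P^m_{k_p} is reduced of dimension dim V − 1, unless dim V = 0, in which case V ∩ Z(f_p) = ∅. -/

import Mathlib

open MvPolynomial Pointwise

noncomputable section

/-- The bigraded polynomial ring `S = k[x_0,…,x_n,y_0,…,y_m]`. -/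
abbrev PolyS (k : Type) [Field k] (n m : ℕ) := MvPolynomial (Fin (n+1) ⊕ Fin (m+1)) k

/-- The bigrading weights: `deg x_i = (1,0)`, `deg y_j = (0,1)`. -/
def wt (n m : ℕ) : (Fin (n+1) ⊕ Fin (m+1)) → ℤ × ℤ :=
  Sum.elim (fun _ => (1,0)) (fun _ => (0,1))

/-- The bigraded piece of `S` in bidegree `γ`. -/
def grad (k : Type) [Field k] (n m : ℕ) (γ : ℤ × ℤ) : Submodule k (PolyS k n m) :=
  weightedHomogeneousSubmodule k (wt n m) γ

/-- `B₁ = (x_0,…,x_n)`. -/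
def Bone (k : Type) [Field k] (n m : ℕ) : Ideal (PolyS k n m) :=
  Ideal.span (Set.range fun i => X (Sum.inl i))

/-- `B₂ = (y_0,…,y_m)`. -/
def Btwo (k : Type) [Field k] (n m : ℕ) : Ideal (PolyS k n m) :=
  Ideal.span (Set.range fun j => X (Sum.inr j))

/-- `B = B₁ ⬝ B₂`, the irrelevant ideal of `ℙⁿ × ℙᵐ`. -/
def Birr (k : Type) [Field k] (n m : ℕ) : Ideal (PolyS k n m) := Bone k n m * Btwo k n m

/-- The saturation `I : C^∞` of an ideal. -/
def satIdeal {k : Type} [Field k] {n m : ℕ} (I C : Ideal (PolyS k n m)) :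
    Ideal (PolyS k n m) :=
  ⨆ t : ℕ, Submodule.colon I (C ^ t)

/-- The bidegree-`γ` piece of `S ⧸ I`, as a `k`-subspace. -/
def quotPiece (k : Type) [Field k] (n m : ℕ) (I : Ideal (PolyS k n m)) (γ : ℤ × ℤ) :
    Submodule k ((PolyS k n m) ⧸ I) :=
  (grad k n m γ).map (Ideal.Quotient.mkₐ k I).toLinearMap

/-- The bigraded Hilbert function of `S ⧸ I`. -/
def HFq (k : Type) [Field k] (n m : ℕ) (I : Ideal (PolyS k n m)) (γ : ℤ × ℤ) : ℕ :=
  Module.finrank k (quotPiece k n m I γ)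

/-- The bigraded Hilbert function of the subscheme of `ℙⁿ × ℙᵐ` defined by `I`, i.e. the
Hilbert function of `S ⧸ (I : B^∞)`. -/
def HFV (k : Type) [Field k] (n m : ℕ) (I : Ideal (PolyS k n m)) (γ : ℤ × ℤ) : ℕ :=
  HFq k n m (satIdeal I (Birr k n m)) γ

/-- `codim V = r`, encoded as: the cone over `V` (i.e. `Spec` of `S` modulo the saturation
of `I`) has Krull dimension `n + m + 2 - r`. -/
def CodimEq (k : Type) [Field k] (n m : ℕ) (I : Ideal (PolyS k n m)) (r : ℕ) : Prop :=
  ringKrullDim ((PolyS k n m) ⧸ satIdeal I (Birr k n m)) = ((n + m + 2 - r : ℕ) : WithBot ℕ∞)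

/-- The Hilbert function of `S` itself. -/
def HFS (k : Type) [Field k] (n m : ℕ) (γ : ℤ × ℤ) : ℕ :=
  Module.finrank k (grad k n m γ)

/-- Integer binomial coefficient `C(x,t)`, with the Hilbert-function convention that it
vanishes for `x < 0`. -/
def ibin (x : ℤ) (t : ℕ) : ℤ := if x < 0 then 0 else (x.toNat.choose t : ℤ)

/-- `χ(a,b) = Σᵢ (−1)^i C(n+m,i) C(n+a−id,n) C(m+b−ie,m)`. -/
def chiCI (n m d e : ℕ) (γ : ℤ × ℤ) : ℤ :=
  ∑ i ∈ Finset.range (n + m + 1),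
    (-1) ^ i * (Nat.choose (n + m) i : ℤ) *
      ibin ((n : ℤ) + γ.1 - i * d) n * ibin ((m : ℤ) + γ.2 - i * e) m

/-- `v_i = i·(d,e) − (n+1,0)`. -/
def vpt (n d e : ℕ) (i : ℤ) : ℤ × ℤ := (i * d - (n + 1), i * e)

/-- `w_i = i·(d,e) − (0,m+1)`. -/
def wpt (m d e : ℕ) (i : ℤ) : ℤ × ℤ := (i * d, i * e - (m + 1))

/-- `σ = (n+m)·(d,e) − (n+1,m+1)`. -/
def sigmaPt (n m d e : ℕ) : ℤ × ℤ :=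
  ((n + m : ℤ) * d - (n + 1), (n + m : ℤ) * e - (m + 1))

/-- `Γ_i = Supp(H^{n+1}_{B₁}(K_{n+i}(f,S))) ∪ Supp(H^{m+1}_{B₂}(K_{m+i}(f,S)))`, computed
explicitly: for `0 ≤ n+i ≤ n+m` the first support is `v_{n+i} + (−ℕ,ℕ)`, and for
`0 ≤ m+i ≤ n+m` the second support is `w_{m+i} + (ℕ,−ℕ)`; otherwise the Koszul terms
vanish. -/
def GammaSet (n m d e : ℕ) (i : ℤ) : Set (ℤ × ℤ) :=
  {γ | (0 ≤ (n : ℤ) + i ∧ (n : ℤ) + i ≤ (n : ℤ) + m ∧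
          γ.1 ≤ ((n : ℤ) + i) * d - ((n : ℤ) + 1) ∧ ((n : ℤ) + i) * e ≤ γ.2) ∨
       (0 ≤ (m : ℤ) + i ∧ (m : ℤ) + i ≤ (n : ℤ) + m ∧
          ((m : ℤ) + i) * d ≤ γ.1 ∧ γ.2 ≤ ((m : ℤ) + i) * e - ((m : ℤ) + 1))}

/-- `V = Proj(S/I)` is a complete intersection scheme of points in `ℙⁿ × ℙᵐ` defined by
`n+m` forms of bidegree `(d,e)`: `I` is generated by the `f i`, each `f i` is bihomogeneous
of bidegree `(d,e)`, and `V` is zero-dimensional (codimension `n+m`). -/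
def IsCIPoints (k : Type) [Field k] (n m d e : ℕ) (f : Fin (n + m) → PolyS k n m)
    (I : Ideal (PolyS k n m)) : Prop :=
  (∀ i, f i ∈ grad k n m ((d : ℤ), (e : ℤ))) ∧ I = Ideal.span (Set.range f) ∧
    CodimEq k n m I (n + m)


open scoped TensorProduct

/-- Generic freeness, localized form. -/
theorem gf_away (D M : Type) [CommRing D] [IsDomain D] [CommRing M] [Algebra D M]
    [Algebra.FiniteType D M] :
    ∃ F : D, F ≠ 0 ∧ Module.Free (Localization.Away F) (Localization.Away F ⊗[D] M) := by
  classical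
  obtain ⟨n, π, hπ⟩ := Algebra.FiniteType.iff_quotient_mvPolynomial''.mp ‹Algebra.FiniteType D M›
  let mo : MonomialOrder (Fin n) := MonomialOrder.lex
  let W : Set (Fin n →₀ ℕ) := {w | ∃ g : MvPolynomial (Fin n) D, g ≠ 0 ∧ π g = 0 ∧ mo.degree g = w}
  let W0 : Set (Fin n →₀ ℕ) := {w | Minimal (· ∈ W) w}
  have hW0fin : W0.Finite := by
    apply WellQuasiOrderedLE.finite_of_isAntichain
    exact setOfPred_minimal_antichain _
  have hW0 : ∀ w ∈ W, ∃ w0 ∈ W0, w0 ≤ w := by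
    intro w hw
    obtain ⟨m, hm, hm'⟩ := exists_minimal_le_of_wellFoundedLT (· ∈ W) w hw
    exact ⟨m, hm', hm⟩
  choose! g hg0 hgπ hgd using (fun (w : Fin n →₀ ℕ) (hw : w ∈ W) => hw)
  let F : D := ∏ w ∈ hW0fin.toFinset, mo.leadingCoeff (g w)
  have hF : F ≠ 0 := by
    refine Finset.prod_ne_zero_iff.mpr fun w hw => ?_
    rw [MonomialOrder.leadingCoeff_ne_zero_iff]
    exact hg0 w ((hW0fin.mem_toFinset.mp hw).1)
  refine ⟨F, hF, ?_⟩
  set D' := Localization.Away F with hD'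
  have hinj : Function.Injective (algebraMap D D') :=
    IsLocalization.injective D' (powers_le_nonZeroDivisors_of_noZeroDivisors hF)
  let q : MvPolynomial (Fin n) D' →ₐ[D'] D' ⊗[D] M :=
    MvPolynomial.aeval (fun i => (1 : D') ⊗ₜ[D] π (MvPolynomial.X i))
  have hq : ∀ p : MvPolynomial (Fin n) D,
      q (MvPolynomial.map (algebraMap D D') p) = (1 : D') ⊗ₜ[D] π p := by
    intro p
    have : ((q.restrictScalars D).comp (MvPolynomial.mapAlgHom (Algebra.ofId D D'))) =
        (Algebra.TensorProduct.includeRight (R := D) (A := D') (B := M)).comp π := by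
      apply MvPolynomial.algHom_ext
      intro i
      simp [q]
    exact DFunLike.congr_fun this p
  let Std : Submodule D' (MvPolynomial (Fin n) D') := MvPolynomial.restrictSupport D' Wᶜ
  let e : Std →ₗ[D'] D' ⊗[D] M := q.toLinearMap.comp Std.subtype
  have hmemStd : ∀ r : MvPolynomial (Fin n) D', r ∈ Std ↔ ∀ c ∈ r.support, c ∉ W := by
    intro r
    simp only [Std, MvPolynomial.mem_restrictSupport_iff]
    rfl
  have hqsurj : Function.Surjective q := by
    intro z
    induction z with
    | zero => exact ⟨0, map_zero _⟩
    | add x y hx hy =>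
      obtain ⟨a, rfl⟩ := hx
      obtain ⟨b, rfl⟩ := hy
      exact ⟨a + b, map_add _ _ _⟩
    | tmul x y =>
      obtain ⟨p, rfl⟩ := hπ y
      refine ⟨x • MvPolynomial.map (algebraMap D D') p, ?_⟩
      rw [map_smul, hq, TensorProduct.smul_tmul', smul_eq_mul, mul_one]
  have hesurj : Function.Surjective e := by
    intro z
    obtain ⟨p, rfl⟩ := hqsurj z
    let Bs : Set (MvPolynomial (Fin n) D') :=
      (fun w => MvPolynomial.map (algebraMap D D') (g w)) '' W0
    have hsupp : ∀ p : MvPolynomial (Fin n) D,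
        (MvPolynomial.map (algebraMap D D') p).support = p.support := fun p =>
      MvPolynomial.support_map_of_injective _ hinj
    have hdeg : ∀ p : MvPolynomial (Fin n) D,
        mo.degree (MvPolynomial.map (algebraMap D D') p) = mo.degree p := fun p => by
      unfold MonomialOrder.degree
      rw [hsupp]
    have hB : ∀ b ∈ Bs, IsUnit (mo.leadingCoeff b) := by
      rintro _ ⟨w, hw, rfl⟩
      unfold MonomialOrder.leadingCoeff
      rw [hdeg, MvPolynomial.coeff_map]
      have h1 : IsUnit (algebraMap D D' F) := IsLocalization.Away.algebraMap_isUnit F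
      refine isUnit_of_dvd_unit (map_dvd _ ?_) h1
      exact Finset.dvd_prod_of_mem (fun w => mo.leadingCoeff (g w)) (hW0fin.mem_toFinset.mpr hw)
    obtain ⟨l, r, h1, -, h3⟩ := mo.div_set hB p
    refine ⟨⟨r, ?_⟩, ?_⟩
    · rw [hmemStd]
      intro c hc hcW
      obtain ⟨w0, hw0, hle⟩ := hW0 c hcW
      apply h3 c hc _ ⟨w0, hw0, rfl⟩
      simp only [hdeg]
      rwa [hgd w0 hw0.1]
    · change q r = q p
      rw [h1, map_add]
      have : q (Finsupp.linearCombination (MvPolynomial (Fin n) D') (fun b : Bs => (b : MvPolynomial (Fin n) D')) l) = 0 := by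
        rw [Finsupp.linearCombination_apply, Finsupp.sum, map_sum]
        refine Finset.sum_eq_zero fun b _ => ?_
        obtain ⟨_, ⟨w, hw, rfl⟩⟩ := b
        rw [smul_eq_mul, map_mul, hq, hgπ w hw.1, TensorProduct.tmul_zero, mul_zero]
      rw [this, zero_add]
  have heinj : Function.Injective e := by
    rw [injective_iff_map_eq_zero]
    rintro ⟨r, hr⟩ hr0
    rw [Subtype.ext_iff]
    change r = 0
    change q r = 0 at hr0
    rw [hmemStd] at hr
    obtain ⟨⟨p, hp⟩⟩ : Nonempty {p : MvPolynomial (Fin n) D // ∃ s ∈ Submonoid.powers F,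
        MvPolynomial.map (algebraMap D D') p = (algebraMap D D' s) • r} := by
      obtain ⟨b, hb⟩ := IsLocalization.exist_integer_multiples (Submonoid.powers F) r.support
        (fun c => r.coeff c)
      choose! a ha using hb
      refine ⟨⟨∑ c ∈ r.support, MvPolynomial.monomial c (a c), b, b.2, ?_⟩⟩
      rw [map_sum]
      conv_rhs => rw [← MvPolynomial.support_sum_monomial_coeff r, Finset.smul_sum]
      refine Finset.sum_congr rfl fun c hc => ?_
      rw [MvPolynomial.map_monomial, ha c hc, MvPolynomial.smul_monomial, Algebra.smul_def]
      rfl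
    obtain ⟨s, hs, hps⟩ := hp
    have h0 : (1 : D') ⊗ₜ[D] π p = 0 := by
      rw [← hq, hps, map_smul, hr0, smul_zero]
    have := (IsLocalizedModule.eq_zero_iff (Submonoid.powers F) (TensorProduct.mk D D' M 1)).mp h0
    obtain ⟨⟨t, ht⟩, htp⟩ := this
    have ht0 : t ≠ 0 := by
      obtain ⟨k, rfl⟩ := ht
      exact pow_ne_zero _ hF
    have hs0 : s ≠ 0 := by
      obtain ⟨k, rfl⟩ := hs
      exact pow_ne_zero _ hF
    have htp' : π (t • p) = 0 := by rw [map_smul]; exact htp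
    by_contra hrne
    have hsr : (algebraMap D D' s) • r ≠ 0 :=
      smul_ne_zero (fun h => hs0 (hinj (by rw [h, map_zero]))) hrne
    have hp0 : p ≠ 0 := by
      rintro rfl
      rw [map_zero] at hps
      exact hsr hps.symm
    have htp0 : t • p ≠ 0 := smul_ne_zero ht0 hp0
    have hd := mo.degree_mem_support htp0
    refine hr (mo.degree (t • p)) ?_ ⟨t • p, htp0, htp', rfl⟩
    rw [MvPolynomial.mem_support_iff] at hd ⊢
    intro hc
    apply hd
    rw [MvPolynomial.coeff_smul]
    have : algebraMap D D' (p.coeff (mo.degree (t • p))) = 0 := by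
      rw [← MvPolynomial.coeff_map, hps, MvPolynomial.coeff_smul, hc, smul_zero]
    rw [← map_zero (algebraMap D D')] at this
    rw [hinj this, smul_zero]
  have hfree : Module.Free D' Std :=
    Module.Free.of_basis (MvPolynomial.basisRestrictSupport D' Wᶜ)
  exact Module.Free.of_equiv (LinearEquiv.ofBijective e ⟨heinj, hesurj⟩)

/-- Generic freeness. -/
theorem gf (D M : Type) [CommRing D] [IsDomain D] [CommRing M] [Algebra D M]
    [Algebra.FiniteType D M] :
    ∃ F : D, F ≠ 0 ∧ ∀ (D' : Type) [CommRing D'] [Algebra D D'], IsUnit (algebraMap D D' F) →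
      Module.Free D' (D' ⊗[D] M) := by
  obtain ⟨F, hF, hfree⟩ := gf_away D M
  refine ⟨F, hF, ?_⟩
  intro D' _ _ hu
  letI : Algebra (Localization.Away F) D' := (IsLocalization.Away.lift F hu).toAlgebra
  haveI : IsScalarTower D (Localization.Away F) D' := IsScalarTower.of_algebraMap_eq (fun x => by
    rw [RingHom.algebraMap_toAlgebra, IsLocalization.Away.lift_eq])
  exact Module.Free.of_equiv
    (Algebra.TensorProduct.cancelBaseChange D (Localization.Away F) D' D' M).toLinearEquiv


/-- Generic nonzerodivisor. -/
theorem nzd_gen (D B : Type) [CommRing D] [IsDomain D] [CommRing B] [Algebra D B]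
    [Algebra.FiniteType D B] (h : B) (F1 : D) (hF1 : F1 ≠ 0)
    (hh : ∀ b, h * b = 0 → F1 • b = 0) :
    ∃ F : D, F ≠ 0 ∧ ∀ (K : Type) [Field K] [Algebra D K], algebraMap D K F ≠ 0 →
      ∀ z : K ⊗[D] B, ((1 : K) ⊗ₜ[D] h) * z = 0 → z = 0 := by
  obtain ⟨F, hF, hfree⟩ := gf D (B ⧸ Ideal.span {h})
  refine ⟨F * F1, mul_ne_zero hF hF1, ?_⟩
  intro K _ _ hK
  set D' := Localization.Away (F * F1) with hD'
  have hu : IsUnit (algebraMap D D' (F * F1)) := IsLocalization.Away.algebraMap_isUnit _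
  have hu1 : IsUnit (algebraMap D D' F) :=
    isUnit_of_dvd_unit (map_dvd _ (Dvd.intro _ rfl)) hu
  have hu2 : IsUnit (algebraMap D D' F1) :=
    isUnit_of_dvd_unit (map_dvd _ (Dvd.intro_left _ rfl)) hu
  have hfree' := hfree D' hu1
  letI : Algebra D' K := (IsLocalization.Away.lift (S := D') (F * F1) (isUnit_iff_ne_zero.mpr hK)).toAlgebra
  haveI : IsScalarTower D D' K := IsScalarTower.of_algebraMap_eq (fun x => by
    rw [RingHom.algebraMap_toAlgebra, IsLocalization.Away.lift_eq])
  let mh : B →ₗ[D] B := LinearMap.mulLeft D h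
  let qh : B →ₗ[D] (B ⧸ Ideal.span {h}) := (Ideal.Quotient.mkₐ D (Ideal.span ({h} : Set B))).toLinearMap
  have hqh : Function.Surjective qh := Ideal.Quotient.mkₐ_surjective D _
  have hex : Function.Exact mh qh := by
    intro y
    change Ideal.Quotient.mk _ y = 0 ↔ _
    rw [Ideal.Quotient.eq_zero_iff_mem, Ideal.mem_span_singleton]
    constructor
    · rintro ⟨c, rfl⟩; exact ⟨c, rfl⟩
    · rintro ⟨c, rfl⟩; exact ⟨c, rfl⟩
  have hex' : Function.Exact (mh.baseChange D') (qh.baseChange D') := lTensor_exact D' hex hqh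
  have hsurj' : Function.Surjective (qh.baseChange D') := LinearMap.lTensor_surjective D' hqh
  have hinj' : Function.Injective (mh.baseChange D') := by
    rw [injective_iff_map_eq_zero]
    intro z hz
    obtain ⟨⟨b, s⟩, hbs⟩ := IsLocalizedModule.surj (Submonoid.powers (F * F1)) (TensorProduct.mk D D' B 1) z
    simp only at hbs
    have hs : (mh.baseChange D') ((s : D) • z) = 0 := by
      rw [← algebraMap_smul D' (s : D) z, map_smul, hz, smul_zero]
    change (s : D) • z = (1 : D') ⊗ₜ b at hbs
    rw [hbs, LinearMap.baseChange_tmul] at hs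
    have := (IsLocalizedModule.eq_zero_iff (Submonoid.powers (F * F1)) (TensorProduct.mk D D' B 1)).mp hs
    obtain ⟨t, ht⟩ := this
    have h1 : h * ((t : D) • b) = 0 := by
      rw [mul_smul_comm]; exact ht
    have h2 := hh _ h1
    have h3 : algebraMap D D' (F1 * t * s) • z = 0 := by
      rw [algebraMap_smul, mul_smul, hbs, ← TensorProduct.tmul_smul, mul_smul, h2, TensorProduct.tmul_zero]
    have h4 : IsUnit (algebraMap D D' (F1 * t * s)) := by
      rw [map_mul, map_mul]
      exact (hu2.mul (IsLocalization.map_units D' t)).mul (IsLocalization.map_units D' s)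
    exact h4.smul_eq_zero.mp h3
  have key := LinearMap.lTensor_injective_of_exact_of_flat (R := D') (qh.baseChange D') hsurj'
    (mh.baseChange D') hinj' hex' K
  intro z hz
  let c := Algebra.TensorProduct.cancelBaseChange D D' K K B
  have hc : ∀ y : K ⊗[D'] (D' ⊗[D] B), c ((mh.baseChange D').lTensor K y) = ((1 : K) ⊗ₜ[D] h) * c y := by
    intro y
    induction y with
    | zero => simp
    | add x y hx hy => rw [map_add, map_add, hx, hy, map_add, mul_add]
    | tmul x y =>
      induction y with
      | zero => simp
      | add a b ha hb => rw [TensorProduct.tmul_add, map_add, map_add, ha, hb, map_add, mul_add]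
      | tmul a b =>
        simp [c, mh]
  have : (mh.baseChange D').lTensor K (c.symm z) = 0 := by
    apply c.injective
    rw [hc, AlgEquiv.apply_symm_apply, hz, map_zero]
  rw [← map_zero ((mh.baseChange D').lTensor K)] at this
  have := key this
  simpa using this

theorem nontriv_gen (E B : Type) [CommRing E] [IsDomain E] [CommRing B] [Algebra E B]
    [Algebra.FiniteType E B] (hinj : Function.Injective (algebraMap E B)) :
    ∃ F : E, F ≠ 0 ∧ ∀ (K : Type) [Field K] [Algebra E K], algebraMap E K F ≠ 0 →
      Nontrivial (K ⊗[E] B) := by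
  obtain ⟨F, hF, hfree⟩ := gf E B
  refine ⟨F, hF, ?_⟩
  intro K _ _ hK
  set D' := Localization.Away F with hD'
  have hu : IsUnit (algebraMap E D' F) := IsLocalization.Away.algebraMap_isUnit _
  have hfree' := hfree D' hu
  letI : Algebra D' K := (IsLocalization.Away.lift (S := D') F (isUnit_iff_ne_zero.mpr hK)).toAlgebra
  haveI : IsScalarTower E D' K := IsScalarTower.of_algebraMap_eq (fun x => by
    rw [RingHom.algebraMap_toAlgebra, IsLocalization.Away.lift_eq])
  haveI : Nontrivial (D' ⊗[E] B) := by
    refine ⟨(1 : D') ⊗ₜ[E] (1 : B), 0, fun h => ?_⟩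
    have := (IsLocalizedModule.eq_zero_iff (Submonoid.powers F) (TensorProduct.mk E D' B 1)).mp h
    obtain ⟨⟨t, htm⟩, ht⟩ := this
    change t • (1 : B) = 0 at ht
    rw [Algebra.smul_def, mul_one, map_eq_zero_iff _ hinj] at ht
    obtain ⟨k, rfl⟩ := htm
    exact pow_ne_zero _ hF ht
  haveI : Nontrivial D' := (Algebra.TensorProduct.includeLeftRingHom (R := E) (A := D') (B := B)).domain_nontrivial
  haveI : Module.FaithfullyFlat D' (D' ⊗[E] B) := inferInstance
  have : Nontrivial (K ⊗[D'] (D' ⊗[E] B)) := Module.FaithfullyFlat.rTensor_nontrivial D' (D' ⊗[E] B) K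
  exact (Algebra.TensorProduct.cancelBaseChange E D' K K B).symm.toEquiv.nontrivial


theorem inj_aux (D E B K K2 : Type) [CommRing D] [CommRing E] [CommRing B] [CommRing K]
    [CommRing K2] [Algebra D E] [Algebra D B] [Algebra E B] [IsScalarTower D E B] [Algebra D K]
    [Algebra D K2] [Algebra E K2] [IsScalarTower D E K2] [Algebra K K2] [IsScalarTower D K K2] :
    ∃ l : K ⊗[D] B →+* K2 ⊗[E] B, ∀ a b, l (a ⊗ₜ b) = (algebraMap K K2 a) ⊗ₜ[E] b := by
  let l : K ⊗[D] B →ₐ[D] K2 ⊗[E] B :=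
    Algebra.TensorProduct.lift
      (((Algebra.TensorProduct.includeLeft : K2 →ₐ[E] K2 ⊗[E] B).restrictScalars D).comp
        (IsScalarTower.toAlgHom D K K2))
      ((Algebra.TensorProduct.includeRight : B →ₐ[E] K2 ⊗[E] B).restrictScalars D)
      (fun _ _ => Commute.all _ _)
  refine ⟨l.toRingHom, fun a b => ?_⟩
  simp [l]

theorem inj_aux2 (D E B K K2 P : Type) [CommRing D] [CommRing E] [CommRing B] [CommRing K]
    [Field K2] [CommRing P] [Algebra D E] [Algebra D B] [Algebra E B] [IsScalarTower D E B] [Algebra D K]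
    [Algebra D K2] [Algebra E K2] [IsScalarTower D E K2] [Algebra K K2] [IsScalarTower D K K2]
    [Nontrivial (K2 ⊗[E] B)] (j : P →+* K2) (hj : Function.Injective j) (ψ : P →+* K ⊗[D] B)
    (h : ∀ l : K ⊗[D] B →+* K2 ⊗[E] B, (∀ a b, l (a ⊗ₜ b) = (algebraMap K K2 a) ⊗ₜ[E] b) →
      l.comp ψ = (Algebra.TensorProduct.includeLeftRingHom).comp j) :
    Function.Injective ψ := by
  obtain ⟨l, hl⟩ := inj_aux D E B K K2
  have h1 : Function.Injective ((Algebra.TensorProduct.includeLeftRingHom (R := E) (A := K2) (B := B)).comp j) := by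
    rw [RingHom.coe_comp]
    exact (RingHom.injective _).comp hj
  rw [← h l hl, RingHom.coe_comp] at h1
  exact h1.of_comp

theorem inj_aux3 (D B K K2 : Type) [CommRing D] [CommRing B] [Field K]
    [Field K2] (r : ℕ) [Algebra D B] [Algebra (MvPolynomial (Fin r) D) B]
    [IsScalarTower D (MvPolynomial (Fin r) D) B] [Algebra D K]
    [Algebra D K2] [Algebra K K2] [IsScalarTower D K K2]
    (j : MvPolynomial (Fin r) K →+* K2) (hj : Function.Injective j)
    (hjK : ∀ a, j (MvPolynomial.C a) = algebraMap K K2 a)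
    (hnt : ∀ [Algebra (MvPolynomial (Fin r) D) K2],
      (∀ p, algebraMap (MvPolynomial (Fin r) D) K2 p = j (MvPolynomial.map (algebraMap D K) p)) →
      Nontrivial (K2 ⊗[MvPolynomial (Fin r) D] B)) :
    Function.Injective (MvPolynomial.aeval (R := K) (fun i => (1 : K) ⊗ₜ[D]
      (algebraMap (MvPolynomial (Fin r) D) B (MvPolynomial.X i)))) := by
  letI a1 : Algebra (MvPolynomial (Fin r) D) K2 :=
    (j.comp (MvPolynomial.map (algebraMap D K))).toAlgebra
  have ha1 : ∀ p, algebraMap (MvPolynomial (Fin r) D) K2 p = j (MvPolynomial.map (algebraMap D K) p) :=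
    fun p => rfl
  haveI : IsScalarTower D (MvPolynomial (Fin r) D) K2 := IsScalarTower.of_algebraMap_eq (fun x => by
    rw [ha1, MvPolynomial.algebraMap_eq, MvPolynomial.map_C, hjK,
      ← IsScalarTower.algebraMap_apply D K K2])
  haveI := hnt ha1
  refine inj_aux2 D (MvPolynomial (Fin r) D) B K K2 (MvPolynomial (Fin r) K) j hj
    (MvPolynomial.aeval (R := K) (fun i => (1 : K) ⊗ₜ[D]
      (algebraMap (MvPolynomial (Fin r) D) B (MvPolynomial.X i)))).toRingHom ?_
  intro l hl
  apply MvPolynomial.ringHom_ext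
  · intro a
    change l (MvPolynomial.aeval _ (MvPolynomial.C a)) = (j (MvPolynomial.C a)) ⊗ₜ[MvPolynomial (Fin r) D] (1 : B)
    rw [MvPolynomial.aeval_C, Algebra.TensorProduct.algebraMap_apply, hl, hjK]
    rfl
  · intro i
    change l (MvPolynomial.aeval _ (MvPolynomial.X i)) = (j (MvPolynomial.X i)) ⊗ₜ[MvPolynomial (Fin r) D] (1 : B)
    rw [MvPolynomial.aeval_X, hl, map_one, Algebra.algebraMap_eq_smul_one, ← TensorProduct.smul_tmul,
      Algebra.smul_def, mul_one, ha1, MvPolynomial.map_X]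

theorem inj_gen (D B : Type) [CommRing D] [IsDomain D] [CommRing B] [Algebra D B]
    [Algebra.FiniteType D B] (r : ℕ) (φ : MvPolynomial (Fin r) D →ₐ[D] B)
    (hinj : Function.Injective φ) :
    ∃ F : D, F ≠ 0 ∧ ∀ (K : Type) [Field K] [Algebra D K], algebraMap D K F ≠ 0 →
      ∃ ψ : MvPolynomial (Fin r) K →ₐ[K] K ⊗[D] B, Function.Injective ψ := by
  letI : Algebra (MvPolynomial (Fin r) D) B := φ.toRingHom.toAlgebra
  haveI : IsScalarTower D (MvPolynomial (Fin r) D) B := IsScalarTower.of_algebraMap_eq (fun x => by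
    change _ = φ (algebraMap _ _ x)
    rw [AlgHom.commutes])
  haveI : Algebra.FiniteType (MvPolynomial (Fin r) D) B :=
    Algebra.FiniteType.of_restrictScalars_finiteType D _ _
  obtain ⟨g, hg, hgK⟩ := nontriv_gen (MvPolynomial (Fin r) D) B hinj
  obtain ⟨μ, hμ⟩ := MvPolynomial.ne_zero_iff.mp hg
  refine ⟨g.coeff μ, hμ, ?_⟩
  intro K _ _ hK
  let K2 := FractionRing (MvPolynomial (Fin r) K)
  refine ⟨_, inj_aux3 D B K K2 r (algebraMap (MvPolynomial (Fin r) K) K2) (IsFractionRing.injective _ _)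
    (fun a => (IsScalarTower.algebraMap_apply K (MvPolynomial (Fin r) K) K2 a).symm) ?_⟩
  intro _ ha
  apply hgK
  rw [ha, Ne, map_eq_zero_iff _ (IsFractionRing.injective _ _)]
  intro h
  apply hK
  rw [← MvPolynomial.coeff_map, h, MvPolynomial.coeff_zero]


theorem tensor_away_zero (D B K Bh : Type) [CommRing D] [CommRing B] [CommRing K] [CommRing Bh]
    [Algebra D B] [Algebra D K] [Algebra B Bh] [Algebra D Bh] [IsScalarTower D B Bh] (h : B)
    [IsLocalization.Away h Bh] (z : K ⊗[D] B)
    (hz : Algebra.TensorProduct.map (AlgHom.id D K) (IsScalarTower.toAlgHom D B Bh) z = 0) :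
    ∃ N : ℕ, ((1 : K) ⊗ₜ[D] h) ^ N * z = 0 := by
  let L := Localization.Away ((1 : K) ⊗ₜ[D] h)
  let ιB : B →ₐ[D] L := (IsScalarTower.toAlgHom D (K ⊗[D] B) L).comp Algebra.TensorProduct.includeRight
  have hu : IsUnit (ιB h) := IsLocalization.Away.algebraMap_isUnit ((1 : K) ⊗ₜ[D] h)
  let r : Bh →+* L := IsLocalization.Away.lift h (g := ιB.toRingHom) hu
  have hr : ∀ b, r (algebraMap B Bh b) = ιB b := fun b => IsLocalization.Away.lift_eq h _ b
  let r' : Bh →ₐ[D] L := { r with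
    commutes' := fun x => by
      change r (algebraMap D Bh x) = _
      rw [IsScalarTower.algebraMap_apply D B Bh, hr, AlgHom.commutes] }
  let l : K ⊗[D] Bh →ₐ[D] L := Algebra.TensorProduct.lift
    ((IsScalarTower.toAlgHom D (K ⊗[D] B) L).comp Algebra.TensorProduct.includeLeft) r'
    (fun _ _ => Commute.all _ _)
  have hl : l.comp (Algebra.TensorProduct.map (AlgHom.id D K) (IsScalarTower.toAlgHom D B Bh))
      = IsScalarTower.toAlgHom D (K ⊗[D] B) L := by
    apply Algebra.TensorProduct.ext
    · ext x
      simp [l]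
    · ext x
      simp only [AlgHom.comp_apply, AlgHom.restrictScalars_apply, Algebra.TensorProduct.includeRight_apply, Algebra.TensorProduct.map_tmul, map_one, l, Algebra.TensorProduct.lift_tmul, one_mul]
      exact hr x
  have h0 : algebraMap (K ⊗[D] B) L z = 0 := by
    have := DFunLike.congr_fun hl z
    rw [AlgHom.comp_apply, hz, map_zero] at this
    exact this.symm
  rw [IsLocalization.map_eq_zero_iff (Submonoid.powers ((1 : K) ⊗ₜ[D] h))] at h0
  obtain ⟨⟨_, N, rfl⟩, hN⟩ := h0
  exact ⟨N, hN⟩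

theorem isReduced_of_smooth (K B : Type) [Field K] [CommRing B] [Algebra K B] [Algebra.Smooth K B] :
    IsReduced B := by
  constructor
  intro b hb
  by_contra hne
  let I : Ideal B := Ideal.span {b} |>.annihilator
  have hI : I ≠ ⊤ := by
    intro h
    have : (1 : B) ∈ I := h ▸ Submodule.mem_top
    rw [Submodule.mem_annihilator_span_singleton, one_smul] at this
    exact hne this
  obtain ⟨p, hp, hIp⟩ := Ideal.exists_le_maximal I hI
  haveI := hp.isPrime
  haveI : Algebra.IsSmoothAt K p := inferInstance
  obtain ⟨f, hf, n, _, _, hS⟩ := Algebra.IsSmoothAt.exists_isStandardEtale_mvPolynomial (R := K) (p := p)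
  set E := MvPolynomial (Fin n) K
  have hred : IsReduced (Localization.Away f) := by
    haveI : Algebra.Etale E (Localization.Away f) := inferInstance
    haveI : IsReduced (FractionRing E ⊗[E] Localization.Away f) :=
      Algebra.FormallyUnramified.isReduced_of_field (FractionRing E) _
    exact isReduced_of_injective
      (Algebra.TensorProduct.includeRight : Localization.Away f →ₐ[E] FractionRing E ⊗[E] Localization.Away f)
      (Algebra.TensorProduct.includeRight_injective (IsFractionRing.injective E (FractionRing E)))
  have h0 : algebraMap B (Localization.Away f) b = 0 := (hb.map _).eq_zero
  rw [IsLocalization.map_eq_zero_iff (Submonoid.powers f)] at h0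
  obtain ⟨⟨_, N, rfl⟩, hN⟩ := h0
  have : f ^ N ∈ I := by
    rw [Submodule.mem_annihilator_span_singleton]; exact hN
  exact hf (hp.isPrime.mem_of_pow_mem _ (hIp this))

theorem smoothAt_minimal (D B : Type) [CommRing D] [IsDomain D] [CharZero D] [CommRing B] [Algebra D B]
    [Algebra.FiniteType D B] [IsReduced B] (p : Ideal B) [p.IsPrime] (hp : p ∈ minimalPrimes B)
    (hpD : p.comap (algebraMap D B) = ⊥) : Algebra.IsSmoothAt D p := by
  haveI : Ring.KrullDimLE 0 (Localization.AtPrime p) := .of_isLocalization _ hp _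
  have hf : IsField (Localization.AtPrime p) := Ring.KrullDimLE.isField_of_isReduced
  let L := FractionRing D
  let P := Localization.AtPrime p
  letI : Field P := hf.toField
  have hinj : Function.Injective (algebraMap D P) := by
    rw [injective_iff_map_eq_zero]
    intro x hx
    rw [IsScalarTower.algebraMap_apply D B P, IsLocalization.map_eq_zero_iff p.primeCompl] at hx
    obtain ⟨⟨s, hs⟩, h⟩ := hx
    have h1 : s * algebraMap D B x ∈ p := by
      have h' : s * algebraMap D B x = 0 := h
      rw [h']; exact p.zero_mem
    have h2 : x ∈ p.comap (algebraMap D B) := (Ideal.IsPrime.mem_or_mem ‹_› h1).resolve_left hs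
    rw [hpD] at h2
    exact h2
  letI : Algebra L P := (IsFractionRing.lift (A := D) (K := L) (L := P) (g := algebraMap D P) hinj).toAlgebra
  haveI : IsScalarTower D L P := IsScalarTower.of_algebraMap_eq (fun x => by
    rw [RingHom.algebraMap_toAlgebra, IsFractionRing.lift_algebraMap])
  haveI : Algebra.EssFiniteType B P := Algebra.EssFiniteType.of_isLocalization _ p.primeCompl
  haveI : Algebra.EssFiniteType D P := Algebra.EssFiniteType.comp D B P
  haveI : Algebra.EssFiniteType L P := Algebra.EssFiniteType.of_comp D L P
  haveI : CharZero L := charZero_of_injective_algebraMap (IsFractionRing.injective D L)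
  haveI : Algebra.FormallySmooth L P := Algebra.FormallySmooth.of_perfectField
  haveI : Algebra.FormallySmooth D L := Algebra.FormallySmooth.of_isLocalization (nonZeroDivisors D)
  exact Algebra.FormallySmooth.comp D L P

theorem reduced_gen (D B : Type) [CommRing D] [IsDomain D] [CharZero D] [IsNoetherianRing D]
    [CommRing B] [Algebra D B] [Algebra.FiniteType D B] [IsReduced B] :
    ∃ F : D, F ≠ 0 ∧ ∀ (K : Type) [Field K] [Algebra D K], algebraMap D K F ≠ 0 →
      IsReduced (K ⊗[D] B) := by
  classical
  haveI : IsNoetherianRing B := Algebra.FiniteType.isNoetherianRing D B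
  haveI : Algebra.FinitePresentation D B := Algebra.FinitePresentation.of_finiteType.mp ‹_›
  have hfin : (minimalPrimes B).Finite := minimalPrimes.finite_of_isNoetherianRing B
  let mp := hfin.toFinset
  have hprime : ∀ p ∈ mp, p.IsPrime := fun p hp =>
    (hfin.mem_toFinset.mp hp).1.1
  let good := mp.filter (fun p => p.comap (algebraMap D B) = ⊥)
  let bad := mp.filter (fun p => p.comap (algebraMap D B) ≠ ⊥)
  obtain ⟨I, hI⟩ := (PrimeSpectrum.isClosed_iff_zeroLocus_ideal _).mp
    (Algebra.isOpen_smoothLocus (R := D) (A := B)).isClosed_compl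
  have hgood : ∀ p ∈ good, ¬ (I ≤ p) := by
    intro p hp hle
    obtain ⟨hp1, hp2⟩ := Finset.mem_filter.mp hp
    haveI := hprime p hp1
    have h1 : (⟨p, this⟩ : PrimeSpectrum B) ∈ PrimeSpectrum.zeroLocus (I : Set B) := hle
    rw [← hI] at h1
    exact h1 (smoothAt_minimal D B p (hfin.mem_toFinset.mp hp1) hp2)
  obtain ⟨h, hhI, hhg⟩ : ∃ h ∈ I, ∀ p ∈ good, h ∉ p := by
    by_contra hcon
    push Not at hcon
    have hsub : (I : Set B) ⊆ ⋃ p ∈ (good : Set (Ideal B)), ((id p : Ideal B) : Set B) := by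
      intro x hx
      obtain ⟨p, hp, hxp⟩ := hcon x hx
      simp only [Set.mem_iUnion]
      exact ⟨p, hp, hxp⟩
    rw [Ideal.subset_union_prime (s := good) (f := id) ⊤ ⊤ (fun p hp _ _ => hprime p (Finset.mem_filter.mp hp).1)] at hsub
    obtain ⟨p, hp, hle⟩ := hsub
    exact hgood p hp hle
  have hsm : Algebra.Smooth D (Localization.Away h) := by
    rw [← Algebra.basicOpen_subset_smoothLocus_iff_smooth, ← Set.compl_subset_compl, hI]
    intro x hx hxh
    exact hxh (hx hhI)
  have hbad : ∀ p ∈ bad, ∃ c : D, c ≠ 0 ∧ algebraMap D B c ∈ p := by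
    intro p hp
    obtain ⟨c, hc, hc0⟩ := Submodule.exists_mem_ne_zero_of_ne_bot (Finset.mem_filter.mp hp).2
    exact ⟨c, hc0, hc⟩
  choose! c hc0 hc using hbad
  obtain ⟨F, hF, hFK⟩ := nzd_gen D B h (∏ p ∈ bad, c p) (Finset.prod_ne_zero_iff.mpr hc0) (by
    intro b hb
    have : (∏ p ∈ bad, c p) • b ∈ nilradical B := by
      rw [nilradical, ← Ideal.sInf_minimalPrimes, Submodule.mem_sInf]
      intro p hp
      have hp1 : p ∈ mp := hfin.mem_toFinset.mpr hp
      haveI := hprime p hp1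
      rw [Algebra.smul_def]
      by_cases hpg : Ideal.comap (algebraMap D B) p = ⊥
      · have hpg' : p ∈ good := Finset.mem_filter.mpr ⟨hp1, hpg⟩
        have h1 : h * b ∈ p := by rw [hb]; exact p.zero_mem
        exact Ideal.mul_mem_left p _ ((Ideal.IsPrime.mem_or_mem this h1).resolve_left (hhg p hpg'))
      · have hpb : p ∈ bad := Finset.mem_filter.mpr ⟨hp1, hpg⟩
        refine Ideal.mul_mem_right _ p ?_
        rw [map_prod]
        exact Ideal.mem_of_dvd p (Finset.dvd_prod_of_mem (fun p => algebraMap D B (c p)) hpb) (hc p hpb)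
    rw [nilradical_eq_zero B] at this
    exact this)
  refine ⟨F, hF, ?_⟩
  intro K _ _ hK
  have hnz := hFK K hK
  haveI : IsReduced (K ⊗[D] Localization.Away h) := isReduced_of_smooth K _
  constructor
  intro z hz
  have h0 : Algebra.TensorProduct.map (AlgHom.id D K) (IsScalarTower.toAlgHom D B (Localization.Away h)) z = 0 :=
    (hz.map _).eq_zero
  obtain ⟨N, hN⟩ := tensor_away_zero D B K (Localization.Away h) h z h0
  induction N with
  | zero => simpa using hN
  | succ N ih =>
    apply ih
    apply hnz
    rw [← mul_assoc, ← pow_succ']; exact hN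


theorem krull_le_of_integral (A B : Type) [CommRing A] [CommRing B] [Algebra A B]
    [Algebra.IsIntegral A B] : ringKrullDim B ≤ ringKrullDim A := by
  refine Order.krullDim_le_of_strictMono (PrimeSpectrum.comap (algebraMap A B)) ?_
  intro p q hpq
  exact Ideal.IsIntegral.comap_lt_comap (R := A) (I := p.asIdeal) (J := q.asIdeal) hpq

theorem coheight_ge_of_integral (A B : Type) [CommRing A] [CommRing B] [Algebra A B]
    [Algebra.IsIntegral A B] (n : ℕ) : ∀ (p : PrimeSpectrum A) (q : PrimeSpectrum B),
    PrimeSpectrum.comap (algebraMap A B) q = p → (n : ℕ∞) ≤ Order.coheight p →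
    (n : ℕ∞) ≤ Order.coheight q := by
  induction n with
  | zero => intro p q _ _; exact bot_le
  | succ n ih =>
    intro p q hpq hn
    obtain ⟨l, hl, hln⟩ := Order.exists_series_of_le_coheight p hn
    have h1 : 0 < l.length := by omega
    let i1 : Fin (l.length + 1) := ⟨1, by omega⟩
    have hp' : p < l i1 := by
      rw [← hl]
      exact l.strictMono (by simp [i1, Fin.lt_def])
    have hc : (n : ℕ∞) ≤ Order.coheight (l i1) := by
      have := Order.rev_index_le_coheight l i1
      refine le_trans ?_ this
      simp [i1, Fin.val_rev, hln]
    obtain ⟨Q, hQ, hQp, hQc⟩ := Ideal.exists_ideal_over_prime_of_isIntegral (R := A) (S := B)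
      (l i1).asIdeal q.asIdeal (by
        have : (PrimeSpectrum.comap (algebraMap A B) q).asIdeal ≤ (l i1).asIdeal := by
          rw [hpq]; exact hp'.le
        exact this)
    have h2 := ih (l i1) ⟨Q, hQp⟩ (PrimeSpectrum.ext hQc) hc
    have h3 : q < ⟨Q, hQp⟩ := by
      refine lt_of_le_of_ne hQ ?_
      intro h
      have : PrimeSpectrum.comap (algebraMap A B) q = l i1 := by
        rw [h]; exact PrimeSpectrum.ext hQc
      rw [hpq] at this
      exact hp'.ne this
    refine le_trans ?_ (Order.coheight_add_one_le h3)
    push_cast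
    gcongr

theorem krull_ge_of_integral (A B : Type) [CommRing A] [CommRing B] [Algebra A B]
    [Algebra.IsIntegral A B] (hinj : Function.Injective (algebraMap A B)) :
    ringKrullDim A ≤ ringKrullDim B := by
  unfold ringKrullDim
  rw [Order.krullDim_eq_iSup_coheight]
  refine iSup_le fun p => ?_
  obtain ⟨Q, -, hQp, hQc⟩ := Ideal.exists_ideal_over_prime_of_isIntegral (R := A) (S := B)
      p.asIdeal ⊥ (by
        rw [Ideal.comap_bot_of_injective _ hinj]; exact bot_le)
  refine le_trans ?_ (Order.coheight_le_krullDim (⟨Q, hQp⟩ : PrimeSpectrum B))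
  rw [WithBot.coe_le_coe]
  refine ENat.forall_natCast_le_iff_le.mp fun n hn => ?_
  exact coheight_ge_of_integral A B n p ⟨Q, hQp⟩ (PrimeSpectrum.ext hQc) hn

theorem krull_mv (K : Type) [Field K] (s : ℕ) :
    ringKrullDim (MvPolynomial (Fin s) K) = (s : WithBot ℕ∞) := by
  rw [MvPolynomial.ringKrullDim_of_isNoetherianRing, ringKrullDim_eq_zero_of_field]
  simp

theorem noether_dim (K R : Type) [Field K] [CommRing R] [Algebra K R] [Algebra.FiniteType K R]
    [Nontrivial R] : ∃ s : ℕ, ringKrullDim R = (s : WithBot ℕ∞) ∧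
      ∃ g : MvPolynomial (Fin s) K →ₐ[K] R, Function.Injective g ∧ g.toRingHom.IsIntegral := by
  obtain ⟨s, g, hg, hi⟩ := exists_integral_inj_algHom_of_fg K R
  refine ⟨s, ?_, g, hg, hi⟩
  letI := g.toRingHom.toAlgebra
  haveI : Algebra.IsIntegral (MvPolynomial (Fin s) K) R := ⟨hi⟩
  rw [← krull_mv K s]
  exact le_antisymm (krull_le_of_integral _ _) (krull_ge_of_integral _ _ hg)

theorem trdeg_eq_dim (K R : Type) [Field K] [CommRing R] [IsDomain R] [Algebra K R]
    [Algebra.FiniteType K R] : ∃ s : ℕ, ringKrullDim R = (s : WithBot ℕ∞) ∧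
      Algebra.trdeg K R = s := by
  obtain ⟨s, hs, g, hg, hi⟩ := noether_dim K R
  refine ⟨s, hs, ?_⟩
  letI := g.toRingHom.toAlgebra
  haveI : Algebra.IsIntegral (MvPolynomial (Fin s) K) R := ⟨hi⟩
  haveI : IsScalarTower K (MvPolynomial (Fin s) K) R := IsScalarTower.of_algebraMap_eq (fun x => (g.commutes x).symm)
  haveI : FaithfulSMul (MvPolynomial (Fin s) K) R := (faithfulSMul_iff_algebraMap_injective _ _).mpr hg
  rw [← trdeg_add_eq K (MvPolynomial (Fin s) K) (A := R), trdeg_eq_zero (R := MvPolynomial (Fin s) K) (A := R),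
    MvPolynomial.trdeg_of_isDomain]
  simp

theorem exists_prime_inj (E R : Type) [CommRing E] [IsDomain E] [CommRing R] (g : E →+* R)
    (hg : Function.Injective g) : ∃ P : Ideal R, P.IsPrime ∧
      Function.Injective ((Ideal.Quotient.mk P).comp g) := by
  obtain ⟨P, hP, hc⟩ := Ideal.exists_comap_eq_of_mem_minimalPrimes_of_injective hg ⊥
    (by rw [IsDomain.minimalPrimes_eq_singleton_bot]; rfl)
  refine ⟨P, hP, ?_⟩
  rw [injective_iff_map_eq_zero]
  intro x hx
  rw [RingHom.comp_apply, Ideal.Quotient.eq_zero_iff_mem] at hx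
  have : x ∈ P.comap g := hx
  rw [hc] at this
  exact this

theorem dim_ge_of_inj (K R : Type) [Field K] [CommRing R] [Algebra K R] [Algebra.FiniteType K R]
    (r : ℕ) (ψ : MvPolynomial (Fin r) K →ₐ[K] R) (hψ : Function.Injective ψ) :
    (r : WithBot ℕ∞) ≤ ringKrullDim R := by
  obtain ⟨P, hP, hi⟩ := exists_prime_inj _ _ ψ.toRingHom hψ
  refine le_trans ?_ (ringKrullDim_quotient_le P)
  obtain ⟨s, hs, ht⟩ := trdeg_eq_dim K (R ⧸ P)
  rw [hs]
  have h1 := trdeg_le_of_injective ((Ideal.Quotient.mkₐ K P).comp ψ) hi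
  rw [ht, MvPolynomial.trdeg_of_isDomain] at h1
  simp at h1
  exact_mod_cast h1


theorem bc_eps (D K σ : Type) [CommRing D] [CommRing K] [Algebra D K]
    (I : Ideal (MvPolynomial σ D)) :
    ∃ ε : MvPolynomial σ K →ₐ[K] K ⊗[D] (MvPolynomial σ D ⧸ I), Function.Surjective ε ∧
      (∀ p : MvPolynomial σ D, ε (MvPolynomial.map (algebraMap D K) p) =
        1 ⊗ₜ[D] Ideal.Quotient.mk I p) ∧
      ∀ g, ε g = 0 → g ∈ I.map (MvPolynomial.map (algebraMap D K)) := by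
  let e := MvPolynomial.algebraTensorAlgEquiv (σ := σ) D K
  let q : K ⊗[D] MvPolynomial σ D →ₐ[K] K ⊗[D] (MvPolynomial σ D ⧸ I) :=
    Algebra.TensorProduct.map (AlgHom.id K K) (Ideal.Quotient.mkₐ D I)
  let ε : MvPolynomial σ K →ₐ[K] K ⊗[D] (MvPolynomial σ D ⧸ I) := q.comp e.symm.toAlgHom
  have h1 : ∀ p : MvPolynomial σ D, ε (MvPolynomial.map (algebraMap D K) p) =
        1 ⊗ₜ[D] Ideal.Quotient.mk I p := by
    intro p
    have : e.symm (MvPolynomial.map (algebraMap D K) p) = 1 ⊗ₜ p := by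
      rw [AlgEquiv.symm_apply_eq]
      simp [e, MvPolynomial.algebraTensorAlgEquiv_tmul]
    change q (e.symm _) = _
    rw [this]
    simp [q]
  refine ⟨ε, ?_, h1, ?_⟩
  · have hq : Function.Surjective q := by
      intro z
      induction z with
      | zero => exact ⟨0, map_zero _⟩
      | add x y hx hy =>
        obtain ⟨a, rfl⟩ := hx
        obtain ⟨b, rfl⟩ := hy
        exact ⟨a + b, map_add _ _ _⟩
      | tmul a b =>
        obtain ⟨b, rfl⟩ := Ideal.Quotient.mk_surjective b
        exact ⟨a ⊗ₜ b, by simp [q]⟩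
    exact hq.comp e.symm.surjective
  · let I' := I.map (MvPolynomial.map (algebraMap D K))
    let η : MvPolynomial σ D →ₐ[D] MvPolynomial σ K ⧸ I' :=
      ((Ideal.Quotient.mkₐ K I').restrictScalars D).comp
        (MvPolynomial.mapAlgHom (Algebra.ofId D K) )
    have hη : ∀ p ∈ I, η p = 0 := by
      intro p hp
      refine Ideal.Quotient.eq_zero_iff_mem.mpr ?_
      exact Ideal.mem_map_of_mem _ hp
    let ω : K ⊗[D] (MvPolynomial σ D ⧸ I) →ₐ[K] MvPolynomial σ K ⧸ I' :=
      Algebra.TensorProduct.lift (Algebra.ofId K _) (Ideal.Quotient.liftₐ I η hη)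
        (fun _ _ => Commute.all _ _)
    have hω : ω.comp ε = Ideal.Quotient.mkₐ K I' := by
      apply MvPolynomial.algHom_ext
      intro v
      have := h1 (MvPolynomial.X v)
      rw [MvPolynomial.map_X] at this
      rw [AlgHom.comp_apply, this]
      simp only [ω, Algebra.TensorProduct.lift_tmul, map_one, one_mul]
      rw [← Ideal.Quotient.mkₐ_eq_mk D, ← AlgHom.comp_apply, Ideal.Quotient.liftₐ_comp]
      simp [η]
    intro g hg
    have := congrArg (fun h => h g) hω
    simp only [AlgHom.comp_apply, hg, map_zero] at this
    exact Ideal.Quotient.eq_zero_iff_mem.mp this.symm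


/-- the generic form with coefficients the indeterminates `X t` -/
noncomputable def fU (k σ T D : Type) [Field k] [Fintype T] [CommRing D] [Algebra k D]
    (X : T → D) (mon : T → MvPolynomial σ k) : MvPolynomial σ D :=
  ∑ t, MvPolynomial.C (X t) * MvPolynomial.map (algebraMap k D) (mon t)

/-- the ideal of the generic section -/
noncomputable def IU (k σ T D : Type) [Field k] [Fintype T] [CommRing D] [Algebra k D]
    (X : T → D) (J : Ideal (MvPolynomial σ k)) (mon : T → MvPolynomial σ k) :
    Ideal (MvPolynomial σ D) :=
  J.map (MvPolynomial.map (algebraMap k D)) ⊔ Ideal.span {fU k σ T D X mon}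

theorem chart_iso (k σ τ D : Type) [Field k] [Fintype τ] [CommRing D] [Algebra k D]
    (eD : MvPolynomial (Option τ) k ≃ₐ[k] D) (X : Option τ → D)
    (hX : ∀ o, X o = eD (MvPolynomial.X o)) (J : Ideal (MvPolynomial σ k))
    (mon : Option τ → MvPolynomial σ k) (w : MvPolynomial σ k)
    (hw : ∃ c N, mon none * c = w ^ N)
    (A : Type) [CommRing A] [Algebra k A] [Algebra (MvPolynomial σ k ⧸ J) A]
    [IsScalarTower k (MvPolynomial σ k ⧸ J) A] [IsLocalization.Away (Ideal.Quotient.mk J w) A]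
    (Cw : Type) [CommRing Cw] [Algebra D Cw]
    [Algebra (MvPolynomial σ D ⧸ IU k σ (Option τ) D X J mon) Cw]
    [IsScalarTower D
      (MvPolynomial σ D ⧸ IU k σ (Option τ) D X J mon) Cw]
    [IsLocalization.Away (Ideal.Quotient.mk (IU k σ (Option τ) D X J mon)
      (MvPolynomial.map (algebraMap k D) w)) Cw] :
    ∃ (φ : D →ₐ[k] MvPolynomial τ A) (e : Cw ≃+* MvPolynomial τ A),
      (∀ t, φ (X (some t)) = MvPolynomial.X t) ∧
      φ (X none) *
        MvPolynomial.C (algebraMap (MvPolynomial σ k ⧸ J) A (Ideal.Quotient.mk J (mon none))) =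
        - ∑ t, MvPolynomial.C (algebraMap (MvPolynomial σ k ⧸ J) A
          (Ideal.Quotient.mk J (mon (some t)))) * MvPolynomial.X t ∧
      ∀ p, e (algebraMap _ Cw p) = φ p := by
  let I := IU k σ (Option τ) D X J mon
  have hI : I = IU k σ (Option τ) D X J mon := rfl
  let ι : MvPolynomial σ k →+* A :=
    (algebraMap (MvPolynomial σ k ⧸ J) A).comp (Ideal.Quotient.mk J)
  have hιw : IsUnit (ι w) := IsLocalization.Away.algebraMap_isUnit (S := A) (Ideal.Quotient.mk J w)
  obtain ⟨c, N, hcN⟩ := hw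
  have hιm : IsUnit (ι (mon none)) := by
    have : IsUnit (ι (w ^ N)) := by rw [map_pow]; exact hιw.pow N
    rw [← hcN, map_mul] at this
    exact isUnit_of_mul_isUnit_left this
  let κ : MvPolynomial σ D →+* Cw := (algebraMap (MvPolynomial σ D ⧸ I) Cw).comp (Ideal.Quotient.mk I)
  have hκw : IsUnit (κ (MvPolynomial.map (algebraMap k D) w)) :=
    IsLocalization.Away.algebraMap_isUnit (S := Cw)
      (Ideal.Quotient.mk I (MvPolynomial.map (algebraMap k D) w))
  have hκm : IsUnit (κ (MvPolynomial.map (algebraMap k D) (mon none))) := by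
    have : IsUnit (κ (MvPolynomial.map (algebraMap k D) (w ^ N))) := by
      rw [map_pow, map_pow]; exact hκw.pow N
    rw [← hcN, map_mul, map_mul] at this
    exact isUnit_of_mul_isUnit_left this
  obtain ⟨u, hu⟩ := hιm
  let φ' : MvPolynomial (Option τ) k →ₐ[k] MvPolynomial τ A := MvPolynomial.aeval (fun o : Option τ => o.elim
    (- ∑ t, MvPolynomial.C (ι (mon (some t)) * (↑u⁻¹ : A)) * MvPolynomial.X t)
    (fun t => MvPolynomial.X t))
  let φ : D →ₐ[k] MvPolynomial τ A := φ'.comp eD.symm.toAlgHom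
  have hφX : ∀ o, φ (X o) = φ' (MvPolynomial.X o) := by
    intro o
    rw [hX]
    change φ' (eD.symm _) = _
    rw [AlgEquiv.symm_apply_apply]
  have hφs : ∀ t, φ (X (some t)) = MvPolynomial.X t := by
    intro t; rw [hφX]; simp [φ']
  have hφn : φ (X none) * MvPolynomial.C (ι (mon none)) =
      - ∑ t, MvPolynomial.C (ι (mon (some t))) * MvPolynomial.X t := by
    rw [hφX]
    simp only [φ', MvPolynomial.aeval_X, Option.elim_none, neg_mul, Finset.sum_mul]
    congr 1
    refine Finset.sum_congr rfl fun t _ => ?_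
    rw [mul_right_comm, ← map_mul, mul_assoc, ← hu, Units.inv_mul, mul_one]
  let α0 : MvPolynomial σ D →+* MvPolynomial τ A :=
    MvPolynomial.eval₂Hom φ.toRingHom (fun v => MvPolynomial.C (ι (MvPolynomial.X v)))
  have hα0C : ∀ p, α0 (MvPolynomial.C p) = φ p := by intro p; simp [α0]
  have hα0m' : α0.comp (MvPolynomial.map (algebraMap k D)) = MvPolynomial.C.comp ι := by
    apply MvPolynomial.ringHom_ext
    · intro r
      simp only [RingHom.comp_apply, MvPolynomial.map_C, hα0C]
      rw [φ.commutes]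
      have h2 : ι (MvPolynomial.C r) = algebraMap k A r := by
        rw [IsScalarTower.algebraMap_apply k (MvPolynomial σ k ⧸ J) A]; rfl
      rw [h2]; rfl
    · intro v; simp [α0]
  have hα0m : ∀ p, α0 (MvPolynomial.map (algebraMap k D) p) = MvPolynomial.C (ι p) := fun p =>
    congrArg (fun h => h p) hα0m'
  have hα0I : ∀ p ∈ I, α0 p = 0 := by
    have : I ≤ RingHom.ker α0 := by
      rw [hI, IU, sup_le_iff, Ideal.map_le_iff_le_comap, Ideal.span_le, Set.singleton_subset_iff]
      constructor
      · intro p hp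
        rw [Ideal.mem_comap, RingHom.mem_ker, hα0m]
        have : ι p = 0 := by
          simp only [ι, RingHom.comp_apply, Ideal.Quotient.eq_zero_iff_mem.mpr hp, map_zero]
        rw [this, map_zero]
      · change α0 _ = 0
        rw [fU, map_sum, Fintype.sum_option]
        simp only [map_mul, hα0C, hα0m, hφn, hφs]
        rw [neg_add_eq_zero]
        exact Finset.sum_congr rfl fun t _ => mul_comm _ _
    exact this
  let α1 : MvPolynomial σ D ⧸ I →+* MvPolynomial τ A := Ideal.Quotient.lift I α0 hα0I
  have hα1 : ∀ p, α1 (Ideal.Quotient.mk I p) = α0 p := fun p => rfl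
  have hα1w : IsUnit (α1 (Ideal.Quotient.mk I (MvPolynomial.map (algebraMap k D) w))) := by
    rw [hα1, hα0m]; exact hιw.map _
  let α : Cw →+* MvPolynomial τ A := IsLocalization.Away.lift _ hα1w
  have hα : ∀ p, α (algebraMap (MvPolynomial σ D ⧸ I) Cw p) = α1 p := fun p => IsLocalization.Away.lift_eq _ hα1w p
  have hακ : ∀ p, α (κ p) = α0 p := fun p => hα _
  -- the inverse
  let β0 : MvPolynomial σ k ⧸ J →+* Cw := Ideal.Quotient.lift J
    (κ.comp (MvPolynomial.map (algebraMap k D))) (by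
      intro p hp
      rw [RingHom.comp_apply]
      have : Ideal.Quotient.mk I (MvPolynomial.map (algebraMap k D) p) = 0 := by
        rw [Ideal.Quotient.eq_zero_iff_mem, hI, IU]
        exact Ideal.mem_sup_left (Ideal.mem_map_of_mem _ hp)
      change algebraMap (MvPolynomial σ D ⧸ I) Cw _ = 0
      rw [this, map_zero])
  have hβ0 : ∀ p, β0 (Ideal.Quotient.mk J p) = κ (MvPolynomial.map (algebraMap k D) p) := fun p => rfl
  have hβ0w : IsUnit (β0 (Ideal.Quotient.mk J w)) := by rw [hβ0]; exact hκw
  let β1 : A →+* Cw := IsLocalization.Away.lift _ hβ0w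
  have hβ1 : ∀ p, β1 (ι p) = κ (MvPolynomial.map (algebraMap k D) p) := fun p =>
    IsLocalization.Away.lift_eq _ hβ0w _
  let β : MvPolynomial τ A →+* Cw := MvPolynomial.eval₂Hom β1
    (fun t => κ (MvPolynomial.C (X (some t))))
  have hβC : ∀ a, β (MvPolynomial.C a) = β1 a := by intro a; simp [β]
  have hβX : ∀ t, β (MvPolynomial.X t) = κ (MvPolynomial.C (X (some t))) := by
    intro a; simp [β]
  have hαβ : α.comp β = RingHom.id _ := by
    apply MvPolynomial.ringHom_ext
    · intro a
      have : (α.comp β1) = (MvPolynomial.C : A →+* MvPolynomial τ A) := by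
        apply IsLocalization.ringHom_ext (Submonoid.powers (Ideal.Quotient.mk J w))
        apply Ideal.Quotient.ringHom_ext
        refine RingHom.ext fun p => ?_
        have h4 : α (β1 (ι p)) = MvPolynomial.C (ι p) := by rw [hβ1, hακ, hα0m]
        exact h4
      rw [RingHom.comp_apply, hβC, ← RingHom.comp_apply, this]; rfl
    · intro t
      rw [RingHom.comp_apply, hβX, hακ, hα0C, hφs]; rfl
  have hβα : β.comp α = RingHom.id _ := by
    apply IsLocalization.ringHom_ext (Submonoid.powers (Ideal.Quotient.mk I
      (MvPolynomial.map (algebraMap k D) w)))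
    apply Ideal.Quotient.ringHom_ext
    have key : ∀ v, β (α (κ v)) = κ v := by
      intro v
      rw [hακ]
      have : (β.comp α0) = κ := by
        have hm : ∀ p, β (α0 (MvPolynomial.map (algebraMap k D) p)) =
            κ (MvPolynomial.map (algebraMap k D) p) := by
          intro p; rw [hα0m, hβC, hβ1]
        apply MvPolynomial.ringHom_ext
        · intro p
          have : ((β.comp α0).comp MvPolynomial.C) = κ.comp MvPolynomial.C := by
            rw [← RingHom.cancel_right (g₂ := κ.comp MvPolynomial.C) (f := eD.toRingEquiv.toRingHom) eD.surjective]
            apply MvPolynomial.ringHom_ext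
            · intro r
              have := hm (MvPolynomial.C r)
              rw [MvPolynomial.map_C] at this
              have h3 : eD (MvPolynomial.C r) = algebraMap k D r := eD.commutes r
              change β (α0 (MvPolynomial.C (eD (MvPolynomial.C r)))) =
                κ (MvPolynomial.C (eD (MvPolynomial.C r)))
              rw [h3]
              exact this
            · intro o
              change β (α0 (MvPolynomial.C (eD (MvPolynomial.X o)))) =
                κ (MvPolynomial.C (eD (MvPolynomial.X o)))
              rw [← hX]
              have hsome : ∀ t, β (α0 (MvPolynomial.C (X (some t)))) =
                  κ (MvPolynomial.C (X (some t))) := by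
                intro t; rw [hα0C, hφs, hβX]
              cases o with
              | some t => exact hsome t
              | none =>
                apply hκm.mul_right_cancel
                rw [← hm, ← map_mul, ← map_mul, hm, ← map_mul]
                have e1 : κ (fU k σ (Option τ) D X mon) = 0 := by
                  have : Ideal.Quotient.mk I (fU k σ (Option τ) D X mon) = 0 := by
                    rw [Ideal.Quotient.eq_zero_iff_mem, hI, IU]
                    exact Ideal.mem_sup_right (Ideal.mem_span_singleton_self _)
                  change algebraMap (MvPolynomial σ D ⧸ I) Cw _ = 0
                  rw [this, map_zero]
                have e2 : β (α0 (fU k σ (Option τ) D X mon)) = 0 := by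
                  rw [← hακ, e1, map_zero, map_zero]
                rw [fU, Fintype.sum_option, map_add] at e1
                rw [fU, Fintype.sum_option, map_add, map_add] at e2
                have e3 : β (α0 (∑ t, MvPolynomial.C (X (some t)) *
                    MvPolynomial.map (algebraMap k D) (mon (some t)))) =
                    κ (∑ t, MvPolynomial.C (X (some t)) *
                    MvPolynomial.map (algebraMap k D) (mon (some t))) := by
                  simp only [map_sum, map_mul, hsome, hm]
                rw [e3] at e2
                exact add_right_cancel (e2.trans e1.symm)
          exact congrArg (fun h => h p) this
        · intro x
          have := hm (MvPolynomial.X x)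
          rw [MvPolynomial.map_X] at this
          exact this
      exact congrArg (fun h => h v) this
    exact RingHom.ext fun v => key v
  refine ⟨φ, RingEquiv.ofRingHom α β hαβ hβα, hφs, hφn, ?_⟩
  intro p
  change α _ = _
  rw [IsScalarTower.algebraMap_apply D (MvPolynomial σ D ⧸ I) Cw, hα]
  exact hα0C p


theorem isReduced_away (R A : Type) [CommRing R] [CommRing A] [Algebra R A] [IsReduced R] (w : R)
    [IsLocalization.Away w A] : IsReduced A :=
  isReduced_localizationPreserves (Submonoid.powers w) A ‹_›

theorem finiteType_away (D R A : Type) [CommRing D] [CommRing R] [CommRing A] [Algebra D R]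
    [Algebra R A] [Algebra D A] [IsScalarTower D R A] [Algebra.FiniteType D R] (w : R)
    [IsLocalization.Away w A] : Algebra.FiniteType D A := by
  haveI : Algebra.FiniteType R A := IsLocalization.finiteType_of_monoid_fg (Submonoid.powers w) A
  exact Algebra.FiniteType.trans (S := R) ‹_› ‹_›

theorem dim_away_le (R A : Type) [CommRing R] [CommRing A]
    [Algebra R A]  (w : R)
    [IsLocalization.Away w A] : ringKrullDim A ≤ ringKrullDim R := by
  refine Order.krullDim_le_of_strictMono (PrimeSpectrum.comap (algebraMap R A)) ?_
  refine Monotone.strictMono_of_injective ?_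
    (PrimeSpectrum.localization_comap_injective A (Submonoid.powers w))
  intro p q h
  exact Ideal.comap_mono h

theorem red_transfer (D B K Bh P : Type) [CommRing D] [CommRing B] [CommRing K] [CommRing Bh]
    [Algebra D B] [Algebra D K] [Algebra B Bh] [Algebra D Bh] [IsScalarTower D B Bh] (h : B)
    [IsLocalization.Away h Bh] [IsReduced (K ⊗[D] Bh)] [CommRing P] (ε : P →+* K ⊗[D] B) (wp : P)
    (hwp : ε wp = 1 ⊗ₜ h) (g : P) (a N : ℕ) (h0 : ε (wp ^ a * g ^ N) = 0) :
    ∃ b, ε (wp ^ b * g) = 0 := by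
  let l : K ⊗[D] B →ₐ[D] K ⊗[D] Bh :=
    Algebra.TensorProduct.map (AlgHom.id D K) (IsScalarTower.toAlgHom D B Bh)
  have hwu : IsUnit (l (1 ⊗ₜ h)) := by
    have h1 : IsUnit (algebraMap B Bh h) := IsLocalization.Away.algebraMap_isUnit h
    have h2 := h1.map (Algebra.TensorProduct.includeRight : Bh →ₐ[D] K ⊗[D] Bh)
    simpa [l] using h2
  rw [map_mul, map_pow, map_pow, hwp] at h0
  have h1 := congrArg l h0
  rw [map_mul, map_pow, map_pow, map_zero] at h1
  have h2 : l (ε g) ^ N = 0 := ((hwu.pow a).mul_right_eq_zero).mp h1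
  have h3 : l (ε g) = 0 := by
    rcases Nat.eq_zero_or_pos N with hN | hN
    · subst hN
      rw [pow_zero] at h2
      rw [← one_mul (l (ε g)), h2, zero_mul]
    · exact pow_eq_zero_iff hN.ne' |>.mp h2
  obtain ⟨b, hb⟩ := tensor_away_zero D B K Bh h (ε g) h3
  refine ⟨b, ?_⟩
  rw [map_mul, map_pow, hwp]
  exact hb

theorem chart_reduced (k σ τ D : Type) [Field k] [CharZero k] [Fintype σ] [Fintype τ] [CommRing D]
    [IsDomain D] [IsNoetherianRing D] [CharZero D] [Algebra k D]
    (eD : MvPolynomial (Option τ) k ≃ₐ[k] D) (X : Option τ → D)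
    (hX : ∀ o, X o = eD (MvPolynomial.X o)) (J : Ideal (MvPolynomial σ k)) (hJ : J.IsRadical)
    (mon : Option τ → MvPolynomial σ k) (w : MvPolynomial σ k)
    (hw : ∃ c N, mon none * c = w ^ N) :
    ∃ F : D, F ≠ 0 ∧ ∀ (K : Type) [Field K] [Algebra D K], algebraMap D K F ≠ 0 →
      ∀ (g : MvPolynomial σ K) (N : ℕ),
        (∃ a, (MvPolynomial.map (algebraMap D K) (MvPolynomial.map (algebraMap k D) w)) ^ a * g ^ N
          ∈ (IU k σ (Option τ) D X J mon).map (MvPolynomial.map (algebraMap D K))) →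
        ∃ b, (MvPolynomial.map (algebraMap D K) (MvPolynomial.map (algebraMap k D) w)) ^ b * g
          ∈ (IU k σ (Option τ) D X J mon).map (MvPolynomial.map (algebraMap D K)) := by
  let I := IU k σ (Option τ) D X J mon
  let wC : MvPolynomial σ D ⧸ I := Ideal.Quotient.mk I (MvPolynomial.map (algebraMap k D) w)
  let Cw := Localization.Away wC
  let A := Localization.Away (Ideal.Quotient.mk J w)
  obtain ⟨φ, e, -, -, -⟩ := chart_iso k σ τ D eD X hX J mon w hw A Cw
  haveI : IsReduced (MvPolynomial σ k ⧸ J) := (Ideal.isRadical_iff_quotient_reduced J).mp hJ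
  haveI : IsReduced A := isReduced_away _ _ (Ideal.Quotient.mk J w)
  haveI : IsReduced Cw := isReduced_of_injective e e.injective
  haveI : Algebra.FiniteType D Cw := finiteType_away D (MvPolynomial σ D ⧸ I) Cw wC
  obtain ⟨F, hF, h⟩ := reduced_gen D Cw
  refine ⟨F, hF, ?_⟩
  intro K _ _ hK g N ⟨a, ha⟩
  haveI := h K hK
  obtain ⟨ε, -, hε, hker⟩ := bc_eps D K σ I
  have hεI : ∀ p ∈ I.map (MvPolynomial.map (algebraMap D K)), ε p = 0 := by
    have : I.map (MvPolynomial.map (algebraMap D K)) ≤ RingHom.ker ε := by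
      rw [Ideal.map_le_iff_le_comap]
      intro p hp
      rw [Ideal.mem_comap, RingHom.mem_ker, hε, Ideal.Quotient.eq_zero_iff_mem.mpr hp,
        TensorProduct.tmul_zero]
    exact this
  obtain ⟨b, hb⟩ := red_transfer D (MvPolynomial σ D ⧸ I) K Cw (MvPolynomial σ K) wC ε.toRingHom
    _ (hε _) g a N (hεI _ ha)
  exact ⟨b, hker _ hb⟩


theorem two_points (k τ : Type) [Field k] [Infinite k] [DecidableEq τ] (l : MvPolynomial τ k)
    (hl : l ≠ 0) (t1 : τ) : ∃ (c : τ → k) (s : k), s ≠ 0 ∧ MvPolynomial.eval c l ≠ 0 ∧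
      MvPolynomial.eval (c + Pi.single t1 s) l ≠ 0 := by
  obtain ⟨c, hc⟩ : ∃ c, MvPolynomial.eval c l ≠ 0 := by
    by_contra! h
    exact hl (MvPolynomial.funext (fun x => by rw [h x, map_zero]))
  let q : Polynomial k := MvPolynomial.aeval
    (fun t => Polynomial.C (c t) + if t = t1 then Polynomial.X else 0) l
  have hq : ∀ s, q.eval s = MvPolynomial.eval (c + Pi.single t1 s) l := by
    intro s
    change Polynomial.evalRingHom s q = _
    simp only [q, MvPolynomial.aeval_def]
    rw [MvPolynomial.hom_eval₂]
    rw [MvPolynomial.eval, MvPolynomial.coe_eval₂Hom]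
    congr 1
    · ext x; simp
    · ext t
      by_cases h : t = t1
      · subst h; simp
      · simp [h]
  have hq0 : q ≠ 0 := by
    intro h
    apply hc
    have := hq 0
    rw [h] at this
    simpa using this.symm
  have hX : Polynomial.X * q ≠ 0 := mul_ne_zero Polynomial.X_ne_zero hq0
  obtain ⟨s, hs⟩ : ∃ s, (Polynomial.X * q).eval s ≠ 0 := by
    by_contra! h
    exact hX (Polynomial.funext (fun x => by rw [h x, Polynomial.eval_zero]))
  rw [Polynomial.eval_mul, Polynomial.eval_X] at hs
  refine ⟨c, s, left_ne_zero_of_mul hs, hc, ?_⟩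
  rw [← hq]
  exact right_ne_zero_of_mul hs

theorem phi_inj (k Q τ : Type) [Field k] [Infinite k] [CommRing Q] [IsDomain Q] [Algebra k Q]
    [Fintype τ] (φ : MvPolynomial (Option τ) k →ₐ[k] MvPolynomial τ Q)
    (hs : ∀ t, φ (MvPolynomial.X (some t)) = MvPolynomial.X t) (a : τ → Q)
    (hn : φ (MvPolynomial.X none) = ∑ t, MvPolynomial.C (a t) * MvPolynomial.X t)
    (t1 : τ) (ht : Transcendental k (a t1)) : Function.Injective φ := by
  classical
  rw [injective_iff_map_eq_zero]
  intro p hp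
  by_contra hne
  let q := MvPolynomial.optionEquivLeft k τ p
  have hq : q ≠ 0 := by
    simpa [q] using hne
  have key : ∀ c : τ → k, MvPolynomial.eval c q.leadingCoeff ≠ 0 →
      IsAlgebraic k (∑ t, a t * algebraMap k Q (c t)) := by
    intro c hc
    refine ⟨q.map (MvPolynomial.eval c), ?_, ?_⟩
    · intro h
      apply hc
      have := congrArg (fun z => z.coeff q.natDegree) h
      simpa using this
    · have h1 : ((Polynomial.eval₂RingHom (algebraMap k Q)
          (∑ t, a t * algebraMap k Q (c t))).comp (Polynomial.mapRingHom (MvPolynomial.eval c))).comp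
          (MvPolynomial.optionEquivLeft k τ).toRingEquiv.toRingHom =
          (MvPolynomial.eval₂Hom (RingHom.id Q) (fun t => algebraMap k Q (c t))).comp φ.toRingHom := by
        apply MvPolynomial.ringHom_ext
        · intro r
          have : φ (MvPolynomial.C r) = MvPolynomial.C (algebraMap k Q r) := φ.commutes r
          simp [this]
        · intro o
          cases o with
          | none => simp [hn]
          | some t => simp [hs]
      have h2 := congrArg (fun h => h p) h1
      simp only [RingHom.comp_apply] at h2
      have h3 : φ.toRingHom p = 0 := hp
      rw [h3, map_zero] at h2
      exact h2
  obtain ⟨c, s, hs0, h1, h2⟩ := two_points k τ q.leadingCoeff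
    (by simpa using hq) t1
  have h3 := (key _ h2).sub (key _ h1)
  have h4 : (∑ t, a t * algebraMap k Q ((c + Pi.single t1 s : τ → k) t)) -
      ∑ t, a t * algebraMap k Q (c t) = algebraMap k Q s * a t1 := by
    rw [← Finset.sum_sub_distrib, Finset.sum_eq_single t1]
    · simp; ring
    · intro b _ hb
      simp [hb]
    · simp
  rw [h4] at h3
  apply ht
  refine IsAlgebraic.of_mul (y := algebraMap k Q s) ?_ (isAlgebraic_algebraMap s) ?_
  · exact mem_nonZeroDivisors_of_ne_zero (by simpa using hs0)
  · first | exact h3 | (rw [mul_comm]; exact h3)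

theorem trdeg_le_two (k Q : Type) [Field k] [CommRing Q] [IsDomain Q] [Algebra k Q] (x y : Q)
    (h : ∀ q : Q, IsAlgebraic (Algebra.adjoin k {x, y}) q) : Algebra.trdeg k Q ≤ 2 := by
  haveI : Algebra.IsAlgebraic (Algebra.adjoin k ({x, y} : Set Q)) Q := ⟨h⟩
  obtain ⟨t, hts, ht⟩ := exists_isTranscendenceBasis_subset (R := k) ({x, y} : Set Q)
  rw [← ht.cardinalMk_eq_trdeg]
  refine (Cardinal.mk_le_mk_of_subset hts).trans ?_
  refine (Cardinal.mk_insert_le).trans ?_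
  simp [one_add_one_eq_two]

/-- some ratio is transcendental -/
theorem exists_transc (k σ T A Q : Type) [Field k] [CommRing A] [Algebra k A] [CommRing Q]
    [IsDomain Q] [Algebra k Q]
    (ι : MvPolynomial σ k →ₐ[k] A) (w : MvPolynomial σ k)
    (hA : ∀ z : A, ∃ (p : MvPolynomial σ k) (N : ℕ), z * ι w ^ N = ι p)
    (hwu : IsUnit (ι w))
    (π : A →ₐ[k] Q) (hπ : Function.Surjective π) (x y : MvPolynomial σ k) (a : T → Q)
    (hmon : ∀ v, ∃ t, π (ι (MvPolynomial.X v)) = a t * π (ι x) ∨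
      π (ι (MvPolynomial.X v)) = a t * π (ι y))
    (r : ℕ) (hr : 3 ≤ r) (htr : (r : Cardinal) ≤ Algebra.trdeg k Q) :
    ∃ t, Transcendental k (a t) := by
  by_contra! hall
  have h2 : ¬ Algebra.trdeg k Q ≤ 2 := by
    intro h
    have := htr.trans h
    have h3 : r ≤ 2 := by exact_mod_cast this
    omega
  apply h2
  let E := Algebra.adjoin k ({π (ι x), π (ι y)} : Set Q)
  refine trdeg_le_two k Q (π (ι x)) (π (ι y)) ?_
  have hx : IsAlgebraic E (π (ι x)) := isAlgebraic_algebraMap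
    (⟨π (ι x), Algebra.subset_adjoin (by simp)⟩ : E)
  have hy : IsAlgebraic E (π (ι y)) := isAlgebraic_algebraMap
    (⟨π (ι y), Algebra.subset_adjoin (by simp)⟩ : E)
  have ha : ∀ t, IsAlgebraic E (a t) := by
    intro t
    have : IsAlgebraic k (a t) := by
      by_contra h; exact hall t h
    exact this.extendScalars (algebraMap k E).injective
  have hS : ∀ p, IsAlgebraic E (π (ι p)) := by
    intro p
    induction p using MvPolynomial.induction_on with
    | C r =>
      have h1 : MvPolynomial.C r = algebraMap k (MvPolynomial σ k) r := rfl
      rw [h1, AlgHom.commutes, AlgHom.commutes, IsScalarTower.algebraMap_apply k E Q]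
      exact isAlgebraic_algebraMap _
    | add p q hp hq => rw [map_add, map_add]; exact hp.add hq
    | mul_X p v hp =>
      rw [map_mul, map_mul]
      refine hp.mul ?_
      obtain ⟨t, h | h⟩ := hmon v
      · rw [h]; exact (ha t).mul hx
      · rw [h]; exact (ha t).mul hy
  intro q
  obtain ⟨z, rfl⟩ := hπ q
  obtain ⟨p, N, hz⟩ := hA z
  have h3 := congrArg π hz
  rw [map_mul, map_pow] at h3
  refine IsAlgebraic.of_mul (y := π (ι w) ^ N) ?_ ((hS w).pow N) ?_
  · exact mem_nonZeroDivisors_of_ne_zero (pow_ne_zero _ (hwu.map π).ne_zero)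
  · first | (rw [h3]; exact hS p) | (rw [mul_comm, h3]; exact hS p)

theorem exists_algInd (D Q : Type) [CommRing D] [IsDomain D] [CommRing Q] [IsDomain Q] [Algebra D Q]
    (hinj : Function.Injective (algebraMap D Q)) (r : ℕ) (h : (r : Cardinal) ≤ Algebra.trdeg D Q) :
    ∃ x : Fin r → Q, AlgebraicIndependent D x := by
  haveI : FaithfulSMul D Q := (faithfulSMul_iff_algebraMap_injective _ _).mpr hinj
  obtain ⟨s, hs⟩ := exists_isTranscendenceBasis D Q
  rw [← hs.cardinalMk_eq_trdeg] at h
  have h2 : Cardinal.mk (Fin r) ≤ Cardinal.mk s := by simpa using h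
  obtain ⟨f⟩ := h2
  exact ⟨_, hs.1.comp f f.injective⟩

theorem trdeg_rel (k D Q τ : Type) [Field k] [CommRing D] [IsDomain D] [CommRing Q] [IsDomain Q]
    [Algebra k D] [Algebra k Q] [Fintype τ] [Algebra.FiniteType k Q]
    (eD : MvPolynomial (Option τ) k ≃ₐ[k] D)
    [Algebra D (MvPolynomial τ Q)] [IsScalarTower k D (MvPolynomial τ Q)]
    (hinj : Function.Injective (algebraMap D (MvPolynomial τ Q))) (r : ℕ)
    (htr : ((r + 1 : ℕ) : Cardinal) ≤ Algebra.trdeg k Q) :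
    (r : Cardinal) ≤ Algebra.trdeg D (MvPolynomial τ Q) := by
  haveI : FaithfulSMul D (MvPolynomial τ Q) := (faithfulSMul_iff_algebraMap_injective _ _).mpr hinj
  have h1 := trdeg_add_eq k D (A := MvPolynomial τ Q)
  have h2 := trdeg_add_eq k Q (A := MvPolynomial τ Q)
  have h3 : Algebra.trdeg k D = (Fintype.card τ + 1 : ℕ) := by
    rw [← eD.trdeg_eq, MvPolynomial.trdeg_of_isDomain]
    simp
  rw [MvPolynomial.trdeg_of_isDomain] at h2
  obtain ⟨s, -, hs⟩ := trdeg_eq_dim k Q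
  rw [hs] at htr h2
  rw [← h2, h3] at h1
  simp only [Cardinal.mk_fintype, Cardinal.lift_natCast] at h1
  have hfin : Algebra.trdeg D (MvPolynomial τ Q) < Cardinal.aleph0 := by
    refine lt_of_le_of_lt (b := ((s + Fintype.card τ : ℕ) : Cardinal)) ?_ (Cardinal.natCast_lt_aleph0)
    push_cast
    rw [← h1]
    exact self_le_add_left _ _
  obtain ⟨t, ht⟩ := Cardinal.lt_aleph0.mp hfin
  rw [ht] at h1 ⊢
  norm_cast at h1 htr ⊢
  omega


theorem lift_inj (D B Q : Type) [CommRing D] [CommRing B] [CommRing Q] [Algebra D B] [Algebra D Q]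
    (p : B →ₐ[D] Q) (hp : Function.Surjective p) (r : ℕ) (x : Fin r → Q)
    (hx : AlgebraicIndependent D x) :
    ∃ ψ : MvPolynomial (Fin r) D →ₐ[D] B, Function.Injective ψ := by
  choose y hy using fun i => hp (x i)
  refine ⟨MvPolynomial.aeval y, ?_⟩
  have h : p.comp (MvPolynomial.aeval y) = MvPolynomial.aeval x := by
    apply MvPolynomial.algHom_ext
    intro i
    simp [hy]
  have h2 : Function.Injective (p.comp (MvPolynomial.aeval y)) := by rw [h]; exact hx
  exact Function.Injective.of_comp h2

theorem alg_neg (Q τ : Type) [CommRing Q] [Fintype τ] (u : Qˣ) (b : τ → Q) (F : MvPolynomial τ Q)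
    (h2 : F * MvPolynomial.C (↑u : Q) = - ∑ t, MvPolynomial.C (b t) * MvPolynomial.X t) :
    F = ∑ t, MvPolynomial.C (- (b t * (↑u⁻¹ : Q))) * MvPolynomial.X t := by
  have h3 := congrArg (fun z => z * MvPolynomial.C (↑u⁻¹ : Q)) h2
  simp only [mul_assoc, ← map_mul, Units.mul_inv, map_one, mul_one] at h3
  rw [h3, neg_mul, Finset.sum_mul, ← Finset.sum_neg_distrib]
  refine Finset.sum_congr rfl fun t _ => ?_
  rw [mul_right_comm, ← map_mul, map_neg, neg_mul]

theorem lower_psi (k σ τ D : Type) [Field k] [CharZero k] [Fintype σ] [Fintype τ] [CommRing D]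
    [IsDomain D] [Algebra k D]
    (eD : MvPolynomial (Option τ) k ≃ₐ[k] D) (X : Option τ → D)
    (hX : ∀ o, X o = eD (MvPolynomial.X o)) (J : Ideal (MvPolynomial σ k))
    (mon : Option τ → MvPolynomial σ k) (w : MvPolynomial σ k)
    (hw : ∃ c N, mon none * c = w ^ N)
    (x y : MvPolynomial σ k) (hmon : ∀ v, ∃ t, mon t * x = mon none * MvPolynomial.X v ∨
      mon t * y = mon none * MvPolynomial.X v)
    (A : Type) [CommRing A] [Algebra k A] [Algebra (MvPolynomial σ k ⧸ J) A]
    [IsScalarTower k (MvPolynomial σ k ⧸ J) A] [IsLocalization.Away (Ideal.Quotient.mk J w) A]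
    (r : ℕ) (hr : 1 ≤ r) (g : MvPolynomial (Fin (r + 2)) k →ₐ[k] A) (hg : Function.Injective g)
    (Cw : Type) [CommRing Cw] [Algebra D Cw]
    (φ : D →ₐ[k] MvPolynomial τ A) (e : Cw ≃+* MvPolynomial τ A)
    (hφs : ∀ t, φ (X (some t)) = MvPolynomial.X t)
    (hφn : φ (X none) *
        MvPolynomial.C (algebraMap (MvPolynomial σ k ⧸ J) A (Ideal.Quotient.mk J (mon none))) =
        - ∑ t, MvPolynomial.C (algebraMap (MvPolynomial σ k ⧸ J) A
          (Ideal.Quotient.mk J (mon (some t)))) * MvPolynomial.X t)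
    (he : ∀ p, e (algebraMap _ Cw p) = φ p) :
    ∃ ψ : MvPolynomial (Fin (r + 1)) D →ₐ[D] Cw, Function.Injective ψ := by
  obtain ⟨P, hP, hPi⟩ := exists_prime_inj _ _ g.toRingHom hg
  haveI : Algebra.FiniteType k A := finiteType_away k (MvPolynomial σ k ⧸ J) A
    (Ideal.Quotient.mk J w)
  have htr : ((r + 2 : ℕ) : Cardinal) ≤ Algebra.trdeg k (A ⧸ P) := by
    have h1 := trdeg_le_of_injective ((Ideal.Quotient.mkₐ k P).comp g) hPi
    rw [MvPolynomial.trdeg_of_isDomain] at h1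
    simpa using h1
  let ι : MvPolynomial σ k →ₐ[k] A :=
    (IsScalarTower.toAlgHom k (MvPolynomial σ k ⧸ J) A).comp (Ideal.Quotient.mkₐ k J)
  have hιe : ∀ p, ι p = algebraMap (MvPolynomial σ k ⧸ J) A (Ideal.Quotient.mk J p) := fun p => rfl
  simp only [← hιe] at hφn
  let π := Ideal.Quotient.mkₐ k P
  have hπ : Function.Surjective π := Ideal.Quotient.mk_surjective
  have hιw : IsUnit (ι w) := IsLocalization.Away.algebraMap_isUnit (S := A) (Ideal.Quotient.mk J w)
  obtain ⟨c, N, hcN⟩ := hw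
  have hιm : IsUnit (ι (mon none)) := by
    have : IsUnit (ι (w ^ N)) := by rw [map_pow]; exact hιw.pow N
    rw [← hcN, map_mul] at this
    exact isUnit_of_mul_isUnit_left this
  obtain ⟨u, hu⟩ := hιm.map π
  let a : Option τ → A ⧸ P := fun t => π (ι (mon t)) * (↑u⁻¹ : A ⧸ P)
  have hmul : ∀ t v z, mon t * z = mon none * MvPolynomial.X v →
      π (ι (MvPolynomial.X v)) = a t * π (ι z) := by
    intro t v z h
    have h2 := congrArg (fun s => π (ι s)) h
    simp only [map_mul] at h2
    rw [← hu] at h2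
    simp only [a]
    rw [mul_right_comm, h2, mul_right_comm, Units.mul_inv, one_mul]
  obtain ⟨t, ht⟩ := exists_transc k σ (Option τ) A (A ⧸ P) ι w (by
      intro z
      obtain ⟨N, p, hp⟩ := IsLocalization.Away.surj (Ideal.Quotient.mk J w) z
      obtain ⟨p, rfl⟩ := Ideal.Quotient.mk_surjective p
      exact ⟨p, N, hp⟩) hιw π hπ x y a (by
      intro v
      obtain ⟨t, h | h⟩ := hmon v
      · exact ⟨t, Or.inl (hmul _ _ _ h)⟩
      · exact ⟨t, Or.inr (hmul _ _ _ h)⟩) (r + 2) (by omega) htr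
  cases t with
  | none =>
    exfalso
    apply ht
    have : a none = 1 := by
      simp only [a]
      rw [← hu, Units.mul_inv]
    rw [this]
    exact isAlgebraic_one
  | some t1 =>
    let m : MvPolynomial τ A →ₐ[k] MvPolynomial τ (A ⧸ P) := MvPolynomial.mapAlgHom π
    have hmC : ∀ z, m (MvPolynomial.C z) = MvPolynomial.C (π z) := fun z => MvPolynomial.map_C _ z
    have hmX : ∀ z, m (MvPolynomial.X z) = MvPolynomial.X z := fun z => MvPolynomial.map_X _ z
    have hinj : Function.Injective (m.comp φ) := by
      have h1 : Function.Injective ((m.comp φ).comp eD.toAlgHom) := by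
        refine phi_inj k (A ⧸ P) τ ((m.comp φ).comp eD.toAlgHom) ?_ (fun t => - a (some t)) ?_ t1 ?_
        · intro t
          change m (φ (eD _)) = _
          rw [← hX, hφs, hmX]
        · change m (φ (eD _)) = _
          rw [← hX]
          have h2 := congrArg m hφn
          simp only [map_mul, map_neg, map_sum, hmC, hmX, ← hu] at h2
          exact alg_neg (A ⧸ P) τ u _ _ h2
        · intro h
          exact ht (by simpa using h.neg)
      intro p q hpq
      have h3 := @h1 (eD.symm p) (eD.symm q) (by
        change m (φ (eD _)) = m (φ (eD _))
        rw [eD.apply_symm_apply, eD.apply_symm_apply]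
        exact hpq)
      exact eD.symm.injective h3
    letI : Algebra D (MvPolynomial τ (A ⧸ P)) := (m.comp φ).toRingHom.toAlgebra
    haveI : IsScalarTower k D (MvPolynomial τ (A ⧸ P)) :=
      IsScalarTower.of_algebraMap_eq (fun z => ((m.comp φ).commutes z).symm)
    have h4 := trdeg_rel k D (A ⧸ P) τ eD hinj (r + 1) htr
    obtain ⟨z, hz⟩ := exists_algInd D (MvPolynomial τ (A ⧸ P)) hinj (r + 1) h4
    let p : Cw →ₐ[D] MvPolynomial τ (A ⧸ P) :=
      { m.toRingHom.comp e.toRingHom with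
        commutes' := by
          intro d
          change m (e (algebraMap D Cw d)) = m (φ d)
          rw [he] }
    refine lift_inj D Cw _ p ?_ (r + 1) z hz
    have : Function.Surjective m := MvPolynomial.map_surjective _ hπ
    exact this.comp e.surjective


theorem dim_transfer (D B K Bh P : Type) [CommRing D] [CommRing B] [CommRing K] [CommRing Bh]
    [Algebra D B] [Algebra D K] [Algebra B Bh] [Algebra D Bh] [IsScalarTower D B Bh] (h : B)
    [IsLocalization.Away h Bh] [CommRing P] (ε : P →+* K ⊗[D] B) (hε : Function.Surjective ε)
    (wp : P) (hwp : ε wp = 1 ⊗ₜ h) (I' : Ideal P)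
    (hI' : ∀ g ∈ I', ∃ N, ε (wp ^ N * g) = 0) :
    ringKrullDim (K ⊗[D] Bh) ≤ ringKrullDim (P ⧸ I') := by
  let l : K ⊗[D] B →ₐ[D] K ⊗[D] Bh :=
    Algebra.TensorProduct.map (AlgHom.id D K) (IsScalarTower.toAlgHom D B Bh)
  have hwu : IsUnit (l (1 ⊗ₜ h)) := by
    have h1 : IsUnit (algebraMap B Bh h) := IsLocalization.Away.algebraMap_isUnit h
    have h2 := h1.map (Algebra.TensorProduct.includeRight : Bh →ₐ[D] K ⊗[D] Bh)
    simpa [l] using h2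
  let θ0 : P ⧸ I' →+* K ⊗[D] Bh := Ideal.Quotient.lift I' (l.toRingHom.comp ε) (by
    intro g hg
    obtain ⟨N, hN⟩ := hI' g hg
    rw [map_mul, map_pow, hwp] at hN
    have h1 := congrArg l hN
    rw [map_mul, map_pow, map_zero] at h1
    exact ((hwu.pow N).mul_right_eq_zero).mp h1)
  have hθ0 : ∀ p, θ0 (Ideal.Quotient.mk I' p) = l (ε p) := fun p => rfl
  let L := Localization.Away (Ideal.Quotient.mk I' wp)
  have hu : IsUnit (θ0 (Ideal.Quotient.mk I' wp)) := by rw [hθ0, hwp]; exact hwu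
  let θ : L →+* K ⊗[D] Bh := IsLocalization.Away.lift _ hu
  have hθ : ∀ p, θ (algebraMap (P ⧸ I') L p) = θ0 p := fun p => IsLocalization.Away.lift_eq _ hu p
  have hsurj : Function.Surjective θ := by
    intro z
    induction z with
    | zero => exact ⟨0, map_zero _⟩
    | add x y hx hy =>
      obtain ⟨a, rfl⟩ := hx
      obtain ⟨b, rfl⟩ := hy
      exact ⟨a + b, map_add _ _ _⟩
    | tmul a b =>
      obtain ⟨N, c, hc⟩ := IsLocalization.Away.surj h b
      obtain ⟨p, hp⟩ := hε (a ⊗ₜ c)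
      have hiw : IsUnit (algebraMap (P ⧸ I') L (Ideal.Quotient.mk I' wp)) :=
        IsLocalization.Away.algebraMap_isUnit _
      obtain ⟨v, hv⟩ := hiw.pow N
      refine ⟨algebraMap (P ⧸ I') L (Ideal.Quotient.mk I' p) * (↑v⁻¹ : L), ?_⟩
      have hθv : IsUnit (θ (v : L)) := v.isUnit.map θ
      apply hθv.mul_right_cancel
      rw [← map_mul, mul_assoc, Units.inv_mul, mul_one, hv, map_pow, hθ, hθ, hθ0, hθ0, hp, hwp]
      simp only [l, Algebra.TensorProduct.map_tmul, AlgHom.id_apply, map_one,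
        Algebra.TensorProduct.tmul_pow, Algebra.TensorProduct.tmul_mul_tmul, one_pow, mul_one]
      congr 1
      exact hc.symm
  exact (ringKrullDim_le_of_surjective θ hsurj).trans (dim_away_le _ _ (Ideal.Quotient.mk I' wp))

theorem chart_lower (k σ τ D : Type) [Field k] [CharZero k] [Fintype σ] [Fintype τ] [CommRing D]
    [IsDomain D] [Algebra k D]
    (eD : MvPolynomial (Option τ) k ≃ₐ[k] D) (X : Option τ → D)
    (hX : ∀ o, X o = eD (MvPolynomial.X o)) (J : Ideal (MvPolynomial σ k))
    (mon : Option τ → MvPolynomial σ k) (w : MvPolynomial σ k)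
    (hw : ∃ c N, mon none * c = w ^ N)
    (x y : MvPolynomial σ k) (hmon : ∀ v, ∃ t, mon t * x = mon none * MvPolynomial.X v ∨
      mon t * y = mon none * MvPolynomial.X v)
    (r : ℕ) (hr : 1 ≤ r) (g : MvPolynomial (Fin (r + 2)) k →ₐ[k]
      Localization.Away (Ideal.Quotient.mk J w)) (hg : Function.Injective g) :
    ∃ F : D, F ≠ 0 ∧ ∀ (K : Type) [Field K] [Algebra D K], algebraMap D K F ≠ 0 →
      ∀ (I' : Ideal (MvPolynomial σ K)),
        (∀ g ∈ I', ∃ N, (MvPolynomial.map (algebraMap D K)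
          (MvPolynomial.map (algebraMap k D) w)) ^ N * g
          ∈ (IU k σ (Option τ) D X J mon).map (MvPolynomial.map (algebraMap D K))) →
        ((r + 1 : ℕ) : WithBot ℕ∞) ≤ ringKrullDim (MvPolynomial σ K ⧸ I') := by
  let I := IU k σ (Option τ) D X J mon
  let wC : MvPolynomial σ D ⧸ I := Ideal.Quotient.mk I (MvPolynomial.map (algebraMap k D) w)
  let Cw := Localization.Away wC
  let A := Localization.Away (Ideal.Quotient.mk J w)
  obtain ⟨φ, e, h1, h2, h3⟩ := chart_iso k σ τ D eD X hX J mon w hw A Cw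
  obtain ⟨ψ, hψ⟩ := lower_psi k σ τ D eD X hX J mon w hw x y hmon A r hr g hg Cw φ e h1 h2 h3
  haveI : Algebra.FiniteType D Cw := finiteType_away D (MvPolynomial σ D ⧸ I) Cw wC
  obtain ⟨F, hF, h⟩ := inj_gen D Cw (r + 1) ψ hψ
  refine ⟨F, hF, ?_⟩
  intro K _ _ hK I' hI'
  obtain ⟨ψK, hψK⟩ := h K hK
  have hd := dim_ge_of_inj K (K ⊗[D] Cw) (r + 1) ψK hψK
  refine hd.trans ?_
  obtain ⟨ε, hsurj, hε, -⟩ := bc_eps D K σ I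
  have hεI : ∀ p ∈ I.map (MvPolynomial.map (algebraMap D K)), ε p = 0 := by
    have : I.map (MvPolynomial.map (algebraMap D K)) ≤ RingHom.ker ε := by
      rw [Ideal.map_le_iff_le_comap]
      intro p hp
      rw [Ideal.mem_comap, RingHom.mem_ker, hε, Ideal.Quotient.eq_zero_iff_mem.mpr hp,
        TensorProduct.tmul_zero]
    exact this
  refine dim_transfer D (MvPolynomial σ D ⧸ I) K Cw (MvPolynomial σ K) wC ε.toRingHom hsurj
    _ (hε _) I' ?_
  intro g hg
  obtain ⟨N, hN⟩ := hI' g hg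
  exact ⟨N, hεI _ hN⟩


theorem nzd_lin (R T : Type) [CommRing R] [IsReduced R] [Fintype T] (r : T → R)
    (hr : ∀ a : R, (∀ t, r t * a = 0) → a = 0) (b : MvPolynomial T R)
    (hb : (∑ t, MvPolynomial.X t * MvPolynomial.C (r t)) * b = 0) : b = 0 := by
  classical
  ext μ
  rw [MvPolynomial.coeff_zero]
  apply hr
  intro t
  have hmem : r t * b.coeff μ ∈ nilradical R := by
    rw [nilradical_eq_sInf, Ideal.mem_sInf]
    intro P hP
    haveI : P.IsPrime := hP
    have h1 := congrArg (MvPolynomial.map (Ideal.Quotient.mk P)) hb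
    rw [map_mul, map_zero, mul_eq_zero] at h1
    rcases h1 with h1 | h1
    · have h2 := congrArg (MvPolynomial.coeff (Finsupp.single t 1)) h1
      rw [MvPolynomial.coeff_map, MvPolynomial.coeff_sum, Finset.sum_eq_single t] at h2
      · simp only [mul_comm (MvPolynomial.X t), MvPolynomial.coeff_C_mul, MvPolynomial.coeff_X, if_true, mul_one,
          MvPolynomial.coeff_zero] at h2
        exact P.mul_mem_right _ (Ideal.Quotient.eq_zero_iff_mem.mp h2)
      · intro s _ hs
        rw [mul_comm, MvPolynomial.coeff_C_mul, MvPolynomial.coeff_X, if_neg, mul_zero]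
        intro h
        exact hs (Finsupp.single_left_injective one_ne_zero h)
      · simp
    · have h2 := congrArg (MvPolynomial.coeff μ) h1
      rw [MvPolynomial.coeff_map, MvPolynomial.coeff_zero] at h2
      exact P.mul_mem_left _ (Ideal.Quotient.eq_zero_iff_mem.mp h2)
  exact IsReduced.eq_zero _ hmem

/-- the generic form is a nonzerodivisor modulo the extension of `J` -/
theorem nzd_fU (k σ T D : Type) [Field k] [Fintype T] [CommRing D] [Algebra k D]
    (eD : MvPolynomial T k ≃ₐ[k] D) (X : T → D)
    (hX : ∀ o, X o = eD (MvPolynomial.X o)) (J : Ideal (MvPolynomial σ k)) (hJ : J.IsRadical)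
    (mon : T → MvPolynomial σ k) (hm : ∀ g, (∀ t, mon t * g ∈ J) → g ∈ J)
    (b : MvPolynomial σ D)
    (hb : fU k σ T D X mon * b ∈ J.map (MvPolynomial.map (algebraMap k D))) :
    b ∈ J.map (MvPolynomial.map (algebraMap k D)) := by
  set JD := J.map (MvPolynomial.map (algebraMap k D)) with hJD
  haveI : IsReduced (MvPolynomial σ k ⧸ J) := (Ideal.isRadical_iff_quotient_reduced J).mp hJ
  let q : MvPolynomial σ k →+* (MvPolynomial σ k ⧸ J) := Ideal.Quotient.mk J
  let a : D →+* MvPolynomial T (MvPolynomial σ k ⧸ J) :=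
    (MvPolynomial.map (q.comp MvPolynomial.C)).comp eD.symm.toRingEquiv.toRingHom
  let Φ : MvPolynomial σ D →+* MvPolynomial T (MvPolynomial σ k ⧸ J) :=
    MvPolynomial.eval₂Hom a (fun v => MvPolynomial.C (q (MvPolynomial.X v)))
  have ha : ∀ c : k, a (algebraMap k D c) = MvPolynomial.C (q (MvPolynomial.C c)) := by
    intro c
    have : eD.symm (algebraMap k D c) = MvPolynomial.C c := eD.symm.commutes c
    change (MvPolynomial.map (q.comp MvPolynomial.C)) (eD.symm (algebraMap k D c)) = _
    rw [this, MvPolynomial.map_C]; rfl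
  have haX : ∀ t, a (X t) = MvPolynomial.X t := by
    intro t
    change (MvPolynomial.map (q.comp MvPolynomial.C)) (eD.symm (X t)) = _
    rw [hX, AlgEquiv.symm_apply_apply, MvPolynomial.map_X]
  have hΦ : ∀ p : MvPolynomial σ k, Φ (MvPolynomial.map (algebraMap k D) p) = MvPolynomial.C (q p) := by
    have : Φ.comp (MvPolynomial.map (algebraMap k D)) = MvPolynomial.C.comp q := by
      apply MvPolynomial.ringHom_ext
      · intro c
        simp only [RingHom.comp_apply, MvPolynomial.map_C]
        simp only [Φ, MvPolynomial.eval₂Hom_C]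
        exact ha c
      · intro v
        simp only [RingHom.comp_apply, MvPolynomial.map_X]
        simp only [Φ, MvPolynomial.eval₂Hom_X']
    intro p
    exact RingHom.congr_fun this p
  have hle : JD ≤ RingHom.ker Φ := by
    rw [hJD, Ideal.map_le_iff_le_comap]
    intro p hp
    rw [Ideal.mem_comap, RingHom.mem_ker, hΦ]
    have : q p = 0 := Ideal.Quotient.eq_zero_iff_mem.mpr hp
    rw [this, map_zero]
  let ι : (MvPolynomial σ k ⧸ J) →+* (MvPolynomial σ D ⧸ JD) :=
    Ideal.quotientMap JD (MvPolynomial.map (algebraMap k D)) Ideal.le_comap_map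
  have hι : ∀ p, ι (q p) = Ideal.Quotient.mk JD (MvPolynomial.map (algebraMap k D) p) := fun p => rfl
  let Ψ : MvPolynomial T (MvPolynomial σ k ⧸ J) →+* (MvPolynomial σ D ⧸ JD) :=
    MvPolynomial.eval₂Hom ι (fun t => Ideal.Quotient.mk JD (MvPolynomial.C (X t)))
  have hΨa : ∀ x : MvPolynomial T k, Ψ (a (eD x)) = Ideal.Quotient.mk JD (MvPolynomial.C (eD x)) := by
    have : (Ψ.comp a).comp eD.toRingEquiv.toRingHom =
        ((Ideal.Quotient.mk JD).comp MvPolynomial.C).comp eD.toRingEquiv.toRingHom := by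
      apply MvPolynomial.ringHom_ext
      · intro c
        have h1 : eD (MvPolynomial.C c) = algebraMap k D c := eD.commutes c
        change Ψ (a (eD (MvPolynomial.C c))) = Ideal.Quotient.mk JD (MvPolynomial.C (eD (MvPolynomial.C c)))
        rw [h1, ha]
        simp only [Ψ, MvPolynomial.eval₂Hom_C]
        rw [hι, MvPolynomial.map_C]
      · intro t
        change Ψ (a (eD (MvPolynomial.X t))) = Ideal.Quotient.mk JD (MvPolynomial.C (eD (MvPolynomial.X t)))
        rw [← hX, haX]
        simp only [Ψ, MvPolynomial.eval₂Hom_X']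
    intro x
    exact RingHom.congr_fun this x
  have hΨΦ : ∀ p, Ψ (Φ p) = Ideal.Quotient.mk JD p := by
    have : Ψ.comp Φ = Ideal.Quotient.mk JD := by
      apply MvPolynomial.ringHom_ext
      · intro c
        simp only [RingHom.comp_apply]
        have : Φ (MvPolynomial.C c) = a c := by simp only [Φ, MvPolynomial.eval₂Hom_C]
        rw [this]
        obtain ⟨x, rfl⟩ := eD.surjective c
        exact hΨa x
      · intro v
        simp only [RingHom.comp_apply]
        have : Φ (MvPolynomial.X v) = MvPolynomial.C (q (MvPolynomial.X v)) := by
          simp only [Φ, MvPolynomial.eval₂Hom_X']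
        rw [this]
        simp only [Ψ, MvPolynomial.eval₂Hom_C]
        rw [hι, MvPolynomial.map_X]
    intro p
    exact RingHom.congr_fun this p
  have h0 : Φ (fU k σ T D X mon * b) = 0 := hle hb
  have hf : Φ (fU k σ T D X mon) = ∑ t, MvPolynomial.X t * MvPolynomial.C (q (mon t)) := by
    rw [fU, map_sum]
    refine Finset.sum_congr rfl fun t _ => ?_
    rw [map_mul, hΦ]
    congr 1
    have : Φ (MvPolynomial.C (X t)) = a (X t) := by simp only [Φ, MvPolynomial.eval₂Hom_C]
    rw [this, haX]
  rw [map_mul, hf] at h0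
  have hb0 : Φ b = 0 := by
    refine nzd_lin _ T (fun t => q (mon t)) ?_ _ h0
    intro c hc
    obtain ⟨g, rfl⟩ := Ideal.Quotient.mk_surjective c
    refine Ideal.Quotient.eq_zero_iff_mem.mpr (hm g fun t => ?_)
    have := hc t
    rw [← Ideal.Quotient.eq_zero_iff_mem]
    rw [map_mul]; exact this
  have := hΨΦ b
  rw [hb0, map_zero] at this
  exact Ideal.Quotient.eq_zero_iff_mem.mp this.symm


theorem nzd_K (k σ T D : Type) [Field k] [Fintype σ] [Fintype T] [CommRing D] [IsDomain D] [Algebra k D]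
    (eD : MvPolynomial T k ≃ₐ[k] D) (X : T → D)
    (hX : ∀ o, X o = eD (MvPolynomial.X o)) (J : Ideal (MvPolynomial σ k)) (hJ : J.IsRadical)
    (mon : T → MvPolynomial σ k) (hm : ∀ g, (∀ t, mon t * g ∈ J) → g ∈ J) :
    ∃ F : D, F ≠ 0 ∧ ∀ (K : Type) [Field K] [Algebra D K], algebraMap D K F ≠ 0 →
      ∀ g : MvPolynomial σ K,
        MvPolynomial.map (algebraMap D K) (fU k σ T D X mon) * g ∈
          (J.map (MvPolynomial.map (algebraMap k D))).map (MvPolynomial.map (algebraMap D K)) →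
        g ∈ (J.map (MvPolynomial.map (algebraMap k D))).map (MvPolynomial.map (algebraMap D K)) := by
  have key := nzd_fU k σ T D eD X hX J hJ mon hm
  set JD := J.map (MvPolynomial.map (algebraMap k D)) with hJD
  obtain ⟨F, hF, h⟩ := nzd_gen D (MvPolynomial σ D ⧸ JD) (Ideal.Quotient.mk JD (fU k σ T D X mon)) 1
    one_ne_zero (by
      intro b hb
      rw [one_smul]
      obtain ⟨b, rfl⟩ := Ideal.Quotient.mk_surjective b
      rw [← map_mul, Ideal.Quotient.eq_zero_iff_mem] at hb
      exact Ideal.Quotient.eq_zero_iff_mem.mpr (key b hb))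
  refine ⟨F, hF, ?_⟩
  intro K _ _ hK g hg
  obtain ⟨ε, hs, he, hker⟩ := bc_eps D K σ JD
  apply hker
  apply h K hK
  rw [← he, ← map_mul]
  have hle : JD.map (MvPolynomial.map (algebraMap D K)) ≤ RingHom.ker ε := by
    rw [Ideal.map_le_iff_le_comap]
    intro p hp
    rw [Ideal.mem_comap, RingHom.mem_ker, he, Ideal.Quotient.eq_zero_iff_mem.mpr hp, TensorProduct.tmul_zero]
  exact hle hg

theorem dim_bc_le (k σ K : Type) [Field k] [Fintype σ] [Field K] [Algebra k K]
    (J : Ideal (MvPolynomial σ k)) (s : ℕ)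
    (hdim : ringKrullDim (MvPolynomial σ k ⧸ J) = (s : WithBot ℕ∞)) :
    ringKrullDim (MvPolynomial σ K ⧸ J.map (MvPolynomial.map (algebraMap k K))) ≤ (s : WithBot ℕ∞) := by
  haveI : Nontrivial (MvPolynomial σ k ⧸ J) := by
    rw [← not_subsingleton_iff_nontrivial]
    intro h
    rw [ringKrullDim_eq_bot_of_subsingleton] at hdim
    exact absurd hdim.symm (by simp)
  obtain ⟨s', hs', g, hg, hi⟩ := noether_dim k (MvPolynomial σ k ⧸ J)
  obtain rfl : s' = s := by
    rw [hs'] at hdim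
    exact_mod_cast hdim
  set JK := J.map (MvPolynomial.map (algebraMap k K)) with hJK
  let ι : (MvPolynomial σ k ⧸ J) →+* (MvPolynomial σ K ⧸ JK) :=
    Ideal.quotientMap JK (MvPolynomial.map (algebraMap k K)) Ideal.le_comap_map
  have hι : ∀ p, ι (Ideal.Quotient.mk J p) = Ideal.Quotient.mk JK (MvPolynomial.map (algebraMap k K) p) :=
    fun p => rfl
  let gK : MvPolynomial (Fin s') K →+* (MvPolynomial σ K ⧸ JK) :=
    MvPolynomial.eval₂Hom ((Ideal.Quotient.mk JK).comp MvPolynomial.C) (fun i => ι (g (MvPolynomial.X i)))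
  have hcomp : gK.comp (MvPolynomial.map (algebraMap k K)) = ι.comp g.toRingHom := by
    apply MvPolynomial.ringHom_ext
    · intro c
      have : g (MvPolynomial.C c) = Ideal.Quotient.mk J (MvPolynomial.C c) := g.commutes c
      simp only [RingHom.comp_apply, MvPolynomial.map_C]
      change _ = ι (g (MvPolynomial.C c))
      rw [this, hι, MvPolynomial.map_C]
      simp only [gK, MvPolynomial.eval₂Hom_C, RingHom.comp_apply]
    · intro i
      simp only [RingHom.comp_apply, MvPolynomial.map_X]
      simp only [gK, MvPolynomial.eval₂Hom_X']
      rfl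
  letI := gK.toAlgebra
  letI := g.toRingHom.toAlgebra
  have hinteg : Algebra.IsIntegral (MvPolynomial (Fin s') K) (MvPolynomial σ K ⧸ JK) := by
    constructor
    intro x
    obtain ⟨p, rfl⟩ := Ideal.Quotient.mk_surjective x
    induction p using MvPolynomial.induction_on with
    | C c =>
      have : Ideal.Quotient.mk JK (MvPolynomial.C c) =
        algebraMap (MvPolynomial (Fin s') K) (MvPolynomial σ K ⧸ JK) (MvPolynomial.C c) := by
        change _ = gK _
        simp only [gK, MvPolynomial.eval₂Hom_C, RingHom.comp_apply]
      rw [this]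
      exact isIntegral_algebraMap
    | add p q hp hq => rw [map_add]; exact hp.add hq
    | mul_X p v hp =>
      rw [map_mul]
      refine hp.mul ?_
      have h1 : IsIntegral (MvPolynomial (Fin s') k) (Ideal.Quotient.mk J (MvPolynomial.X v)) := hi _
      have h2 := IsIntegral.map_of_comp_eq (MvPolynomial.map (algebraMap k K)) ι hcomp h1
      rw [hι, MvPolynomial.map_X] at h2
      exact h2
  calc _ ≤ ringKrullDim (MvPolynomial (Fin s') K) := krull_le_of_integral _ _
    _ = _ := krull_mv K s'

theorem wb_cancel (x : WithBot ℕ∞) (s : ℕ) (h : x + 1 ≤ (s : WithBot ℕ∞) + 1) :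
    x ≤ (s : WithBot ℕ∞) := by
  induction x using WithBot.recBotCoe with
  | bot => exact bot_le
  | coe a =>
    have h' : a + 1 ≤ (s : ℕ∞) + 1 := by exact_mod_cast h
    have h2 : a ≤ (s : ℕ∞) := (ENat.add_le_add_iff_right (by simp)).mp h'
    exact_mod_cast h2

theorem dim_cut_le (A : Type) [CommRing A] (J I : Ideal A) (f : A) (hJI : J ≤ I) (hf : f ∈ I)
    (hnz : ∀ g, f * g ∈ J → g ∈ J) (s : ℕ) (hs : ringKrullDim (A ⧸ J) ≤ ((s + 1 : ℕ) : WithBot ℕ∞)) :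
    ringKrullDim (A ⧸ I) ≤ (s : WithBot ℕ∞) := by
  have hnzd : Ideal.Quotient.mk J f ∈ nonZeroDivisors (A ⧸ J) := by
    rw [mem_nonZeroDivisors_iff_right]
    intro b hb
    obtain ⟨b, rfl⟩ := Ideal.Quotient.mk_surjective b
    rw [← map_mul, Ideal.Quotient.eq_zero_iff_mem, mul_comm] at hb
    exact Ideal.Quotient.eq_zero_iff_mem.mpr (hnz b hb)
  have h1 := ringKrullDim_quotient_succ_le_of_nonZeroDivisor hnzd
  let φ : ((A ⧸ J) ⧸ Ideal.span {Ideal.Quotient.mk J f}) →+* A ⧸ I :=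
    Ideal.Quotient.lift _ (Ideal.Quotient.factor hJI) (by
      intro a ha
      have : Ideal.span {Ideal.Quotient.mk J f} ≤ RingHom.ker (Ideal.Quotient.factor hJI) := by
        rw [Ideal.span_singleton_le_iff_mem, RingHom.mem_ker, Ideal.Quotient.factor_mk]
        exact Ideal.Quotient.eq_zero_iff_mem.mpr hf
      exact this ha)
  have hφ : Function.Surjective φ :=
    Ideal.Quotient.lift_surjective_of_surjective _ _ (Ideal.Quotient.factor_surjective hJI)
  have h2 := ringKrullDim_le_of_surjective φ hφ
  have h3 := h1.trans hs
  have h4 : ringKrullDim ((A ⧸ J) ⧸ Ideal.span {Ideal.Quotient.mk J f}) ≤ (s : WithBot ℕ∞) := by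
    push_cast at h3
    exact wb_cancel _ s h3
  exact h2.trans h4


theorem IU_map (k σ T D K : Type) [Field k] [Fintype T] [CommRing D] [Algebra k D]
    [Field K] [Algebra k K] [Algebra D K] [IsScalarTower k D K]
    (X : T → D) (J : Ideal (MvPolynomial σ k)) (mon : T → MvPolynomial σ k) :
    (IU k σ T D X J mon).map (MvPolynomial.map (algebraMap D K)) =
      J.map (MvPolynomial.map (algebraMap k K)) ⊔
        Ideal.span {∑ t, MvPolynomial.C (algebraMap D K (X t)) * MvPolynomial.map (algebraMap k K) (mon t)} ∧
    (J.map (MvPolynomial.map (algebraMap k D))).map (MvPolynomial.map (algebraMap D K)) =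
      J.map (MvPolynomial.map (algebraMap k K)) ∧
    MvPolynomial.map (algebraMap D K) (fU k σ T D X mon) =
      ∑ t, MvPolynomial.C (algebraMap D K (X t)) * MvPolynomial.map (algebraMap k K) (mon t) ∧
    ∀ p : MvPolynomial σ k, MvPolynomial.map (algebraMap D K) (MvPolynomial.map (algebraMap k D) p) =
      MvPolynomial.map (algebraMap k K) p := by
  have h4 : ∀ p : MvPolynomial σ k, MvPolynomial.map (algebraMap D K) (MvPolynomial.map (algebraMap k D) p) =
      MvPolynomial.map (algebraMap k K) p := by
    intro p
    rw [MvPolynomial.map_map, ← IsScalarTower.algebraMap_eq k D K]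
  have h3 : MvPolynomial.map (algebraMap D K) (fU k σ T D X mon) =
      ∑ t, MvPolynomial.C (algebraMap D K (X t)) * MvPolynomial.map (algebraMap k K) (mon t) := by
    rw [fU, map_sum]
    refine Finset.sum_congr rfl fun t _ => ?_
    rw [map_mul, h4, MvPolynomial.map_C]
  have h2 : (J.map (MvPolynomial.map (algebraMap k D))).map (MvPolynomial.map (algebraMap D K)) =
      J.map (MvPolynomial.map (algebraMap k K)) := by
    rw [Ideal.map_map]
    congr 1
    exact RingHom.ext h4
  refine ⟨?_, h2, h3, h4⟩
  rw [IU, Ideal.map_sup, h2, Ideal.map_span, Set.image_singleton, h3]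

theorem homog_component (K σ : Type) [Field K] (wt : σ → ℤ × ℤ) (G : Set (MvPolynomial σ K))
    (hG : ∀ g ∈ G, ∃ γ, MvPolynomial.IsWeightedHomogeneous wt g γ) (p : MvPolynomial σ K)
    (hp : p ∈ Ideal.span G) (γ : ℤ × ℤ) :
    MvPolynomial.weightedHomogeneousComponent wt γ p ∈ Ideal.span G := by
  letI : GradedAlgebra (MvPolynomial.weightedHomogeneousSubmodule K wt) :=
    MvPolynomial.weightedGradedAlgebra K wt
  refine MvPolynomial.weightedHomogeneousComponent_mem_of_mem (R := K) (w := wt) ?_ hp γ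
  apply Ideal.homogeneous_span
  exact hG

theorem pow_mem_of_dim (K σ : Type) [Field K] [Fintype σ] (wt : σ → ℤ × ℤ) (G : Set (MvPolynomial σ K))
    (hG : ∀ g ∈ G, ∃ γ, MvPolynomial.IsWeightedHomogeneous wt g γ)
    (a b : σ) (ha : wt a = (1, 0)) (hb : wt b = (0, 1))
    (hdim : ringKrullDim (MvPolynomial σ K ⧸ Ideal.span G) ≤ ((1 : ℕ) : WithBot ℕ∞)) :
    ∃ N, (MvPolynomial.X a * MvPolynomial.X b : MvPolynomial σ K) ^ N ∈ Ideal.span G := by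
  classical
  by_contra hcon
  push Not at hcon
  have hcomp := homog_component K σ wt G hG
  set I := Ideal.span G with hI
  let w : MvPolynomial σ K := MvPolynomial.X a * MvPolynomial.X b
  let A := Localization.Away (Ideal.Quotient.mk I w)
  let ξ : Fin 2 → MvPolynomial σ K := ![MvPolynomial.X a, MvPolynomial.X b]
  let θ : MvPolynomial (Fin 2) K →ₐ[K] MvPolynomial σ K := MvPolynomial.aeval ξ
  let ψ : MvPolynomial (Fin 2) K →ₐ[K] A :=
    ((IsScalarTower.toAlgHom K (MvPolynomial σ K ⧸ I) A).comp (Ideal.Quotient.mkₐ K I)).comp θ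
  have hψ : Function.Injective ψ := by
    rw [injective_iff_map_eq_zero]
    intro P hP
    by_contra hP0
    have h1 : algebraMap (MvPolynomial σ K ⧸ I) A (Ideal.Quotient.mk I (θ P)) = 0 := hP
    rw [IsLocalization.map_eq_zero_iff (Submonoid.powers (Ideal.Quotient.mk I w))] at h1
    obtain ⟨⟨_, N, rfl⟩, hN⟩ := h1
    have hN' : w ^ N * θ P ∈ I := by
      rw [← Ideal.Quotient.eq_zero_iff_mem, map_mul, map_pow]
      exact hN
    obtain ⟨μ, hμ⟩ := MvPolynomial.ne_zero_iff.mp hP0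
    have hexp : w ^ N * θ P = ∑ ν ∈ P.support,
        MvPolynomial.C (P.coeff ν) * (MvPolynomial.X a ^ (ν 0 + N) * MvPolynomial.X b ^ (ν 1 + N)) := by
      conv_lhs => rw [P.as_sum]
      rw [map_sum, Finset.mul_sum]
      refine Finset.sum_congr rfl fun ν _ => ?_
      simp only [θ, MvPolynomial.aeval_monomial, MvPolynomial.algebraMap_eq, w]
      rw [Finsupp.prod_fintype _ _ (by simp), Fin.prod_univ_two]
      simp only [ξ, Matrix.cons_val_zero, Matrix.cons_val_one]
      ring
    have hh : ∀ ν : Fin 2 →₀ ℕ, MvPolynomial.C (P.coeff ν) * (MvPolynomial.X a ^ (ν 0 + N) * MvPolynomial.X b ^ (ν 1 + N)) ∈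
        MvPolynomial.weightedHomogeneousSubmodule K wt (((ν 0 + N : ℕ) : ℤ), ((ν 1 + N : ℕ) : ℤ)) := by
      intro ν
      rw [MvPolynomial.mem_weightedHomogeneousSubmodule]
      apply MvPolynomial.IsWeightedHomogeneous.C_mul
      have e1 := (MvPolynomial.isWeightedHomogeneous_X K wt a).pow (ν 0 + N)
      have e2 := (MvPolynomial.isWeightedHomogeneous_X K wt b).pow (ν 1 + N)
      have e3 := e1.mul e2
      rw [ha, hb] at e3
      convert e3 using 1
      simp
    have hmem := hcomp _ hN' (((μ 0 + N : ℕ) : ℤ), ((μ 1 + N : ℕ) : ℤ))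
    rw [hexp, map_sum, Finset.sum_eq_single μ] at hmem
    · rw [MvPolynomial.weightedHomogeneousComponent_of_mem (hh μ), if_pos rfl] at hmem
      have h5 := I.mul_mem_left (MvPolynomial.C (P.coeff μ)⁻¹ * (MvPolynomial.X a ^ (μ 1) * MvPolynomial.X b ^ (μ 0))) hmem
      have h6 : MvPolynomial.C (P.coeff μ)⁻¹ * (MvPolynomial.X a ^ (μ 1) * MvPolynomial.X b ^ (μ 0)) *
          (MvPolynomial.C (P.coeff μ) * (MvPolynomial.X a ^ (μ 0 + N) * MvPolynomial.X b ^ (μ 1 + N))) =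
          (MvPolynomial.X a * MvPolynomial.X b : MvPolynomial σ K) ^ (μ 0 + μ 1 + N) := by
        have : MvPolynomial.C (P.coeff μ)⁻¹ * MvPolynomial.C (P.coeff μ) = (1 : MvPolynomial σ K) := by
          rw [← map_mul, inv_mul_cancel₀ hμ, map_one]
        linear_combination ((MvPolynomial.X a ^ (μ 1) * MvPolynomial.X b ^ (μ 0)) * (MvPolynomial.X a ^ (μ 0 + N) * MvPolynomial.X b ^ (μ 1 + N))) * this
      rw [h6] at h5
      exact hcon _ h5
    · intro ν _ hν
      rw [MvPolynomial.weightedHomogeneousComponent_of_mem (hh ν), if_neg]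
      intro h
      apply hν
      rw [Prod.mk.injEq] at h
      ext i
      fin_cases i
      · have := h.1; simp at this ⊢; omega
      · have := h.2; simp at this ⊢; omega
    · intro h
      exact absurd (MvPolynomial.mem_support_iff.mpr hμ) h
  haveI : Algebra.FiniteType K A := finiteType_away K (MvPolynomial σ K ⧸ I) A (Ideal.Quotient.mk I w)
  have h1 := dim_ge_of_inj K A 2 ψ hψ
  have h2 := dim_away_le (MvPolynomial σ K ⧸ I) A (Ideal.Quotient.mk I w)
  have h3 := (h1.trans h2).trans hdim
  exact absurd h3 (by norm_cast)


theorem mem_satIdeal_iff {k : Type} [Field k] {n m : ℕ} (I : Ideal (PolyS k n m)) (g : PolyS k n m) :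
    g ∈ satIdeal I (Birr k n m) ↔
      ∀ i j, ∃ N, ((MvPolynomial.X (Sum.inl i) * MvPolynomial.X (Sum.inr j) : PolyS k n m)) ^ N * g ∈ I := by
  have hmono : Monotone (fun t : ℕ => Submodule.colon I ((Birr k n m : Set (PolyS k n m)) ^ t)) := by
    apply monotone_nat_of_le_succ
    intro t r hr
    rw [Submodule.mem_colon] at hr ⊢
    intro s hs
    rw [pow_succ, Set.mem_mul] at hs
    obtain ⟨a, ha, b, hb, rfl⟩ := hs
    have := I.mul_mem_right b (hr a ha)
    rwa [smul_eq_mul, mul_assoc] at this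
  have hmem : g ∈ satIdeal I (Birr k n m) ↔
      ∃ t : ℕ, g ∈ Submodule.colon I ((Birr k n m : Set (PolyS k n m)) ^ t) := by
    rw [satIdeal]
    exact Submodule.mem_iSup_of_directed _ hmono.directed_le
  rw [hmem]
  constructor
  · rintro ⟨t, ht⟩ i j
    refine ⟨t, ?_⟩
    rw [Submodule.mem_colon] at ht
    have := ht ((MvPolynomial.X (Sum.inl i) * MvPolynomial.X (Sum.inr j)) ^ t) (Set.pow_mem_pow ?_)
    · rwa [smul_eq_mul, mul_comm] at this
    · exact Ideal.mul_mem_mul (Ideal.subset_span ⟨i, rfl⟩) (Ideal.subset_span ⟨j, rfl⟩)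
  · intro h
    have hle : Birr k n m ≤ (Submodule.colon I {g}).radical := by
      rw [Birr, Bone, Btwo, Ideal.span_mul_span', Ideal.span_le]
      rintro _ ⟨_, ⟨i, rfl⟩, _, ⟨j, rfl⟩, rfl⟩
      obtain ⟨N, hN⟩ := h i j
      exact ⟨N, Submodule.mem_colon_singleton.mpr hN⟩
    obtain ⟨t, ht⟩ := Ideal.exists_pow_le_of_le_radical_of_fg hle (IsNoetherian.noetherian _)
    refine ⟨t, ?_⟩
    rw [Submodule.mem_colon]
    intro s hs
    have h1 : s ∈ Birr k n m ^ t := by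
      clear ht
      induction t generalizing s with
      | zero => simp
      | succ t ih =>
        rw [pow_succ, Set.mem_mul] at hs
        obtain ⟨a, ha, b, hb, rfl⟩ := hs
        rw [pow_succ]
        exact Ideal.mul_mem_mul (ih a ha) hb
    have h2 := Submodule.mem_colon_singleton.mp (ht h1)
    rwa [smul_eq_mul, mul_comm] at h2


/-- the ideal of the special section with coefficients `u` -/
def Isec (k σ T K : Type) [Field k] [Fintype T] [Field K] [Algebra k K]
    (J : Ideal (MvPolynomial σ k)) (mon : T → MvPolynomial σ k) (u : T → K) :
    Ideal (MvPolynomial σ K) :=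
  J.map (MvPolynomial.map (algebraMap k K)) ⊔
    Ideal.span {∑ t, MvPolynomial.C (u t) * MvPolynomial.map (algebraMap k K) (mon t)}

theorem spec_all (k T : Type) [Field k] [CharZero k] [Finite T]
    (P : ∀ (K : Type) [Field K] [Algebra k K], (T → K) → Prop)
    (h : ∀ (D : Type) [CommRing D] [IsDomain D] [IsNoetherianRing D] [CharZero D] [Algebra k D]
      (eD : MvPolynomial T k ≃ₐ[k] D), ∃ F : D, F ≠ 0 ∧ ∀ (K : Type) [Field K] [Algebra k K]
        [Algebra D K] [IsScalarTower k D K], algebraMap D K F ≠ 0 →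
          P K (fun t => algebraMap D K (eD (MvPolynomial.X t)))) :
    ∃ F : MvPolynomial T k, F ≠ 0 ∧ ∀ (K : Type) [Field K] [Algebra k K] (u : T → K),
      MvPolynomial.aeval u F ≠ 0 → P K u := by
  obtain ⟨F, hF, h1⟩ := h (MvPolynomial T k) AlgEquiv.refl
  refine ⟨F, hF, ?_⟩
  intro K _ _ u hu
  letI : Algebra (MvPolynomial T k) K := (MvPolynomial.aeval u).toRingHom.toAlgebra
  haveI : IsScalarTower k (MvPolynomial T k) K :=
    IsScalarTower.of_algebraMap_eq (fun x => ((MvPolynomial.aeval u).commutes x).symm)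
  have h2 := h1 K hu
  have h3 : (fun t => algebraMap (MvPolynomial T k) K
      ((AlgEquiv.refl : MvPolynomial T k ≃ₐ[k] MvPolynomial T k) (MvPolynomial.X t))) = u := by
    funext t
    change MvPolynomial.aeval u (MvPolynomial.X t) = u t
    exact MvPolynomial.aeval_X u t
  rw [h3] at h2
  exact h2

theorem Isec_reindex (k σ T τ D K : Type) [Field k] [Fintype T] [Fintype τ] [Field K] [Algebra k K]
    [CommRing D] [Algebra k D] [Algebra D K] [IsScalarTower k D K]
    (e : τ ≃ T) (X : T → D)
    (J : Ideal (MvPolynomial σ k)) (mon : T → MvPolynomial σ k) :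
    (IU k σ τ D (fun o => X (e o)) J (fun o => mon (e o))).map (MvPolynomial.map (algebraMap D K)) =
      Isec k σ T K J mon (fun t => algebraMap D K (X t)) := by
  rw [(IU_map k σ τ D K (fun o => X (e o)) J (fun o => mon (e o))).1, Isec]
  congr 3
  exact Equiv.sum_comp e (fun t => MvPolynomial.C (algebraMap D K (X t)) *
    MvPolynomial.map (algebraMap k K) (mon t))

theorem red_T (k σ T : Type) [Field k] [CharZero k] [Fintype σ] [Fintype T] (t0 : T)
    (J : Ideal (MvPolynomial σ k)) (hJ : J.IsRadical)
    (mon : T → MvPolynomial σ k) (w : MvPolynomial σ k) (hw : ∃ c N, mon t0 * c = w ^ N) :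
    ∃ F : MvPolynomial T k, F ≠ 0 ∧ ∀ (K : Type) [Field K] [Algebra k K] (u : T → K),
      MvPolynomial.aeval u F ≠ 0 → ∀ (g : MvPolynomial σ K) (N : ℕ),
        (∃ a, (MvPolynomial.map (algebraMap k K) w) ^ a * g ^ N ∈ Isec k σ T K J mon u) →
        ∃ b, (MvPolynomial.map (algebraMap k K) w) ^ b * g ∈ Isec k σ T K J mon u := by
  classical
  apply spec_all
  intro D _ _ _ _ _ eD
  let e : Option {t // t ≠ t0} ≃ T := Equiv.optionSubtypeNe t0
  obtain ⟨F, hF, h⟩ := chart_reduced k σ {t // t ≠ t0} D ((MvPolynomial.renameEquiv k e).trans eD)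
    (fun o => eD (MvPolynomial.X (e o)))
    (by intro o
        rw [AlgEquiv.trans_apply, MvPolynomial.renameEquiv_apply, MvPolynomial.rename_X])
    J hJ (fun o => mon (e o)) w hw
  refine ⟨F, hF, ?_⟩
  intro K _ _ _ _ hK g N hg
  have h1 := h K hK g N
  rw [Isec_reindex k σ T _ D K e (fun t => eD (MvPolynomial.X t)) J mon,
    (IU_map k σ T D K (fun t => eD (MvPolynomial.X t)) J mon).2.2.2 w] at h1
  exact h1 hg

theorem lower_T (k σ T : Type) [Field k] [CharZero k] [Fintype σ] [Fintype T] (t0 : T)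
    (J : Ideal (MvPolynomial σ k))
    (mon : T → MvPolynomial σ k) (w : MvPolynomial σ k) (hw : ∃ c N, mon t0 * c = w ^ N)
    (x y : MvPolynomial σ k) (hmon : ∀ v, ∃ t, mon t * x = mon t0 * MvPolynomial.X v ∨
      mon t * y = mon t0 * MvPolynomial.X v)
    (r : ℕ) (hr : 1 ≤ r) (g : MvPolynomial (Fin (r + 2)) k →ₐ[k]
      Localization.Away (Ideal.Quotient.mk J w)) (hg : Function.Injective g) :
    ∃ F : MvPolynomial T k, F ≠ 0 ∧ ∀ (K : Type) [Field K] [Algebra k K] (u : T → K),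
      MvPolynomial.aeval u F ≠ 0 → ∀ (I' : Ideal (MvPolynomial σ K)),
        (∀ g ∈ I', ∃ N, (MvPolynomial.map (algebraMap k K) w) ^ N * g ∈ Isec k σ T K J mon u) →
        ((r + 1 : ℕ) : WithBot ℕ∞) ≤ ringKrullDim (MvPolynomial σ K ⧸ I') := by
  classical
  apply spec_all
  intro D _ _ _ _ _ eD
  let e : Option {t // t ≠ t0} ≃ T := Equiv.optionSubtypeNe t0
  obtain ⟨F, hF, h⟩ := chart_lower k σ {t // t ≠ t0} D ((MvPolynomial.renameEquiv k e).trans eD)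
    (fun o => eD (MvPolynomial.X (e o)))
    (by intro o
        rw [AlgEquiv.trans_apply, MvPolynomial.renameEquiv_apply, MvPolynomial.rename_X])
    J (fun o => mon (e o)) w hw x y
    (by intro v
        obtain ⟨t, ht⟩ := hmon v
        refine ⟨e.symm t, ?_⟩
        simp only [Equiv.apply_symm_apply]
        exact ht) r hr g hg
  refine ⟨F, hF, ?_⟩
  intro K _ _ _ _ hK I' hI'
  have h1 := h K hK I'
  rw [Isec_reindex k σ T _ D K e (fun t => eD (MvPolynomial.X t)) J mon,
    (IU_map k σ T D K (fun t => eD (MvPolynomial.X t)) J mon).2.2.2 w] at h1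
  exact h1 hI'

theorem upper_T (k σ T : Type) [Field k] [CharZero k] [Fintype σ] [Fintype T]
    (J : Ideal (MvPolynomial σ k)) (hJ : J.IsRadical)
    (mon : T → MvPolynomial σ k) (hm : ∀ g, (∀ t, mon t * g ∈ J) → g ∈ J)
    (s : ℕ) (hdim : ringKrullDim (MvPolynomial σ k ⧸ J) = ((s + 1 : ℕ) : WithBot ℕ∞)) :
    ∃ F : MvPolynomial T k, F ≠ 0 ∧ ∀ (K : Type) [Field K] [Algebra k K] (u : T → K),
      MvPolynomial.aeval u F ≠ 0 → ∀ (I' : Ideal (MvPolynomial σ K)),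
        Isec k σ T K J mon u ≤ I' →
        ringKrullDim (MvPolynomial σ K ⧸ I') ≤ (s : WithBot ℕ∞) := by
  apply spec_all
  intro D _ _ _ _ _ eD
  obtain ⟨F, hF, h⟩ := nzd_K k σ T D eD (fun t => eD (MvPolynomial.X t)) (fun _ => rfl) J hJ mon hm
  refine ⟨F, hF, ?_⟩
  intro K _ _ _ _ hK I' hI'
  have h1 := h K hK
  obtain ⟨_, h2, h3, _⟩ := IU_map k σ T D K (fun t => eD (MvPolynomial.X t)) J mon
  rw [h2, h3] at h1
  exact dim_cut_le _ _ I' _ (le_sup_left.trans hI')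
    (hI' (Ideal.mem_sup_right (Ideal.mem_span_singleton_self _))) h1 s (dim_bc_le k σ K J _ hdim)


theorem weight_wt (n m : ℕ) (μ : (Fin (n+1) ⊕ Fin (m+1)) →₀ ℕ) :
    Finsupp.weight (wt n m) μ = ((∑ i, (μ (Sum.inl i) : ℤ)), (∑ j, (μ (Sum.inr j) : ℤ))) := by
  rw [Finsupp.weight_apply, Finsupp.sum_fintype _ _ (by simp), Fintype.sum_sum_type]
  ext <;> simp [wt, Prod.fst_sum, Prod.snd_sum]

/-- exponents of bidegree `(d,e)` -/
abbrev Texp (n m d e : ℕ) : Type :=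
  {μ : (Fin (n+1) ⊕ Fin (m+1)) →₀ ℕ // Finsupp.weight (wt n m) μ = ((d : ℤ), (e : ℤ))}

theorem finite_Texp (n m d e : ℕ) : Finite (Texp n m d e) := by
  have : Set.Finite {μ : (Fin (n+1) ⊕ Fin (m+1)) →₀ ℕ |
      Finsupp.weight (wt n m) μ = ((d : ℤ), (e : ℤ))} := by
    refine (Set.finite_Iic (Finsupp.equivFunOnFinite.symm fun _ => d + e)).subset ?_
    intro μ hμ
    rw [Set.mem_ofPred_eq, weight_wt, Prod.mk.injEq] at hμ
    rw [Set.mem_Iic]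
    intro v
    simp only [Finsupp.equivFunOnFinite_symm_apply_apply]
    have h1 : ∑ i, μ (Sum.inl i) = d := by exact_mod_cast hμ.1
    have h2 : ∑ i, μ (Sum.inr i) = e := by exact_mod_cast hμ.2
    rcases v with i | j
    · have := Finset.single_le_sum (f := fun i => μ (Sum.inl i)) (fun _ _ => Nat.zero_le _) (Finset.mem_univ i)
      omega
    · have := Finset.single_le_sum (f := fun i => μ (Sum.inr i)) (fun _ _ => Nat.zero_le _) (Finset.mem_univ j)
      omega
  exact this.to_subtype

/-- the monomial attached to an exponent -/
def monT (k : Type) [Field k] (n m d e : ℕ) (t : Texp n m d e) : PolyS k n m :=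
  MvPolynomial.monomial t.1 1

/-- the exponent of `x_i^d y_j^e` -/
def tz (n m d e : ℕ) (i : Fin (n+1)) (j : Fin (m+1)) : Texp n m d e :=
  ⟨Finsupp.single (Sum.inl i) d + Finsupp.single (Sum.inr j) e, by
    rw [map_add, Finsupp.weight_single, Finsupp.weight_single]
    simp [wt]⟩

theorem tz_mon (k : Type) [Field k] (n m d e : ℕ) (i : Fin (n+1)) (j : Fin (m+1)) :
    ∃ c N, monT k n m d e (tz n m d e i j) * c =
      (MvPolynomial.X (Sum.inl i) * MvPolynomial.X (Sum.inr j)) ^ N := by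
  refine ⟨MvPolynomial.X (Sum.inl i) ^ e * MvPolynomial.X (Sum.inr j) ^ d, d + e, ?_⟩
  have : monT k n m d e (tz n m d e i j) =
      MvPolynomial.X (Sum.inl i) ^ d * MvPolynomial.X (Sum.inr j) ^ e := by
    rw [monT, tz, MvPolynomial.X_pow_eq_monomial, MvPolynomial.X_pow_eq_monomial,
      MvPolynomial.monomial_mul, one_mul]
  rw [this]
  ring

theorem tz_hmon (k : Type) [Field k] (n m d e : ℕ) (hd : d ≠ 0) (he : e ≠ 0)
    (i : Fin (n+1)) (j : Fin (m+1)) (v : Fin (n+1) ⊕ Fin (m+1)) :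
    ∃ t, monT k n m d e t * MvPolynomial.X (Sum.inl i) =
        monT k n m d e (tz n m d e i j) * MvPolynomial.X v ∨
      monT k n m d e t * MvPolynomial.X (Sum.inr j) =
        monT k n m d e (tz n m d e i j) * MvPolynomial.X v := by
  obtain ⟨d, rfl⟩ := Nat.exists_eq_succ_of_ne_zero hd
  obtain ⟨e, rfl⟩ := Nat.exists_eq_succ_of_ne_zero he
  rcases v with a | a
  · refine ⟨⟨Finsupp.single (Sum.inl a) 1 + Finsupp.single (Sum.inl i) d +
      Finsupp.single (Sum.inr j) (e + 1), ?_⟩, Or.inl ?_⟩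
    · rw [map_add, map_add, Finsupp.weight_single, Finsupp.weight_single, Finsupp.weight_single]
      simp [wt, add_comm]
    · simp only [monT, tz, MvPolynomial.X, MvPolynomial.monomial_mul, one_mul, Nat.succ_eq_add_one,
        Finsupp.single_add]
      congr 2
      abel
  · refine ⟨⟨Finsupp.single (Sum.inr a) 1 + Finsupp.single (Sum.inl i) (d + 1) +
      Finsupp.single (Sum.inr j) e, ?_⟩, Or.inr ?_⟩
    · rw [map_add, map_add, Finsupp.weight_single, Finsupp.weight_single, Finsupp.weight_single]
      simp [wt, add_comm]
    · simp only [monT, tz, MvPolynomial.X, MvPolynomial.monomial_mul, one_mul, Nat.succ_eq_add_one,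
        Finsupp.single_add]
      congr 2
      abel

theorem away_zero (R : Type) [CommRing R] (w a : R)
    (h : algebraMap R (Localization.Away w) a = 0) : ∃ N : ℕ, w ^ N * a = 0 := by
  rw [IsLocalization.map_eq_zero_iff (Submonoid.powers w)] at h
  obtain ⟨⟨_, N, rfl⟩, hN⟩ := h
  exact ⟨N, hN⟩

theorem choose_chart (k : Type) [Field k] (n m : ℕ) (J : Ideal (PolyS k n m))
    (hsat : satIdeal J (Birr k n m) = J) (s : ℕ)
    (g : MvPolynomial (Fin s) k →ₐ[k] (PolyS k n m ⧸ J)) (hg : Function.Injective g) :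
    ∃ (i : Fin (n+1)) (j : Fin (m+1)) (g' : MvPolynomial (Fin s) k →ₐ[k]
      Localization.Away (Ideal.Quotient.mk J
        (MvPolynomial.X (Sum.inl i) * MvPolynomial.X (Sum.inr j)))), Function.Injective g' := by
  classical
  by_contra hcon
  push Not at hcon
  have h1 : ∀ p : Fin (n+1) × Fin (m+1), ∃ P : MvPolynomial (Fin s) k, P ≠ 0 ∧ ∃ N : ℕ,
      (Ideal.Quotient.mk J (MvPolynomial.X (Sum.inl p.1) * MvPolynomial.X (Sum.inr p.2))) ^ N * g P = 0 := by
    rintro ⟨i, j⟩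
    have := hcon i j ((IsScalarTower.toAlgHom k (PolyS k n m ⧸ J) _).comp g)
    rw [injective_iff_map_eq_zero] at this
    push Not at this
    obtain ⟨P, hP, hP0⟩ := this
    have h1 : algebraMap (PolyS k n m ⧸ J) (Localization.Away (Ideal.Quotient.mk J
        (MvPolynomial.X (Sum.inl i) * MvPolynomial.X (Sum.inr j)))) (g P) = 0 := hP
    obtain ⟨N, hN⟩ := away_zero _ _ _ h1
    exact ⟨P, hP0, N, hN⟩
  choose P hP0 N hN using h1
  have hprod : ∏ p, P p ≠ 0 := Finset.prod_ne_zero_iff.mpr fun p _ => hP0 p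
  apply hprod
  apply hg
  rw [map_zero]
  obtain ⟨q, hq⟩ := Ideal.Quotient.mk_surjective (g (∏ p, P p))
  rw [← hq, Ideal.Quotient.eq_zero_iff_mem, ← hsat, mem_satIdeal_iff]
  intro i j
  refine ⟨N (i, j), ?_⟩
  have h2 : g (∏ p, P p) = g (P (i, j)) * g (∏ p ∈ Finset.univ.erase (i, j), P p) := by
    rw [← map_mul, Finset.mul_prod_erase _ _ (Finset.mem_univ (i, j))]
  have h3 := hN (i, j)
  have h4 := (Ideal.Quotient.mk J).map_mul
    ((MvPolynomial.X (Sum.inl i) * MvPolynomial.X (Sum.inr j)) ^ N (i, j)) q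
  rw [← Ideal.Quotient.eq_zero_iff_mem, h4, map_pow, hq, h2, ← mul_assoc, h3, zero_mul]

theorem form_eq (k K : Type) [Field k] [Field K] [Algebra k K] (n m d e : ℕ) [Fintype (Texp n m d e)]
    (f : PolyS K n m) (hf : f ∈ grad K n m ((d : ℤ), (e : ℤ))) :
    ∑ t : Texp n m d e, MvPolynomial.C (MvPolynomial.coeff t.1 f) *
      MvPolynomial.map (algebraMap k K) (monT k n m d e t) = f := by
  classical
  ext μ
  rw [MvPolynomial.coeff_sum]
  simp only [monT, MvPolynomial.map_monomial, map_one, MvPolynomial.coeff_C_mul,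
    MvPolynomial.coeff_monomial, mul_ite, mul_one, mul_zero]
  by_cases hμ : Finsupp.weight (wt n m) μ = ((d : ℤ), (e : ℤ))
  · rw [Finset.sum_eq_single ⟨μ, hμ⟩]
    · simp
    · intro t _ ht
      rw [if_neg]
      intro h
      exact ht (Subtype.ext h)
    · simp
  · rw [Finset.sum_eq_zero]
    · by_contra h
      exact hμ (hf (Ne.symm h))
    · intro t _
      rw [if_neg]
      rintro rfl
      exact hμ t.2


theorem stmt15 (k : Type) [Field k] [CharZero k] (n m : ℕ) (d e : ℕ) (hd : d ≠ 0) (he : e ≠ 0)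
    -- `V ⊂ ℙⁿ_k × ℙᵐ_k` a reduced closed subscheme, given by its bihomogeneous,
    -- `B`-saturated, radical ideal `J`, with `dim V = δ`
    (J : Ideal (PolyS k n m))
    (hhom : ∃ G : Set (PolyS k n m), (∀ g ∈ G, ∃ γ : ℤ × ℤ, g ∈ grad k n m γ) ∧
      J = Ideal.span G)
    (hsat : satIdeal J (Birr k n m) = J) (hrad : J.radical = J)
    (δ : ℕ) (hdim : ringKrullDim ((PolyS k n m) ⧸ J) = ((δ + 2 : ℕ) : WithBot ℕ∞)) :
    -- there is a nonempty open `Ω ⊂ Spec k[U_{α,β}]`, the complement of the zero locus of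
    -- a nonzero polynomial `F` in the indeterminate coefficients `U_{α,β}` of a form of
    -- bidegree `(d,e)`, …
    ∃ F : MvPolynomial ((Fin (n + 1) ⊕ Fin (m + 1)) →₀ ℕ) k,
      F ≠ 0 ∧
      (∀ μ ∈ F.vars, Finsupp.weight (wt n m) μ = ((d : ℤ), (e : ℤ))) ∧
      -- … such that for every point `p ∈ Ω`, with residue field `K = k_p` and
      -- corresponding form `f = f_p` of bidegree `(d,e)`:
      ∀ (K : Type) [Field K] [Algebra k K],
        ∀ f : MvPolynomial (Fin (n + 1) ⊕ Fin (m + 1)) K,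
          f ∈ grad K n m ((d : ℤ), (e : ℤ)) →
          MvPolynomial.aeval (fun μ => MvPolynomial.coeff μ f) F ≠ (0 : K) →
          ∀ IK : Ideal (PolyS K n m),
            IK = J.map (MvPolynomial.map (algebraMap k K)) ⊔ Ideal.span {f} →
            -- if `dim V = 0` then `V ∩ Z(f_p) = ∅` …
            (δ = 0 → satIdeal IK (Birr K n m) = ⊤) ∧
            -- … and otherwise `V ∩ Z(f_p) ⊆ ℙⁿ_{k_p} × ℙᵐ_{k_p}` is reduced of
            -- dimension `dim V − 1`
            (δ ≠ 0 →
              (satIdeal IK (Birr K n m)).radical = satIdeal IK (Birr K n m) ∧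
              ringKrullDim ((PolyS K n m) ⧸ satIdeal IK (Birr K n m)) =
                ((δ + 1 : ℕ) : WithBot ℕ∞)) := by
  classical
  haveI := finite_Texp n m d e
  letI : Fintype (Texp n m d e) := Fintype.ofFinite _
  have hJr : J.IsRadical := by
    rw [← hrad]; exact Ideal.radical_isRadical J
  -- the three families of open conditions
  have hred := fun p : Fin (n+1) × Fin (m+1) =>
    red_T k (Fin (n+1) ⊕ Fin (m+1)) (Texp n m d e) (tz n m d e p.1 p.2) J hJr (monT k n m d e)
      (MvPolynomial.X (Sum.inl p.1) * MvPolynomial.X (Sum.inr p.2)) (tz_mon k n m d e p.1 p.2)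
  choose F1 hF1 hred using hred
  obtain ⟨F2, hF2, hup⟩ := upper_T k (Fin (n+1) ⊕ Fin (m+1)) (Texp n m d e) J hJr (monT k n m d e)
    (by
      intro g hg
      rw [← hsat, mem_satIdeal_iff]
      intro i j
      obtain ⟨c, N, hc⟩ := tz_mon k n m d e i j
      refine ⟨N, ?_⟩
      rw [← hc, mul_right_comm]
      exact J.mul_mem_right _ (hg _)) (δ + 1) hdim
  have hlow : ∃ F : MvPolynomial (Texp n m d e) k, F ≠ 0 ∧ (δ ≠ 0 → ∃ i j,
      ∀ (K : Type) [Field K] [Algebra k K] (u : Texp n m d e → K),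
      MvPolynomial.aeval u F ≠ 0 → ∀ (I' : Ideal (MvPolynomial (Fin (n+1) ⊕ Fin (m+1)) K)),
        (∀ g ∈ I', ∃ N, (MvPolynomial.map (algebraMap k K)
          (MvPolynomial.X (Sum.inl i) * MvPolynomial.X (Sum.inr j))) ^ N * g ∈
            Isec k (Fin (n+1) ⊕ Fin (m+1)) (Texp n m d e) K J (monT k n m d e) u) →
        ((δ + 1 : ℕ) : WithBot ℕ∞) ≤ ringKrullDim (MvPolynomial (Fin (n+1) ⊕ Fin (m+1)) K ⧸ I')) := by
    by_cases hδ : δ = 0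
    · exact ⟨1, one_ne_zero, fun h => absurd hδ h⟩
    · haveI : Nontrivial (PolyS k n m ⧸ J) := by
        rw [← not_subsingleton_iff_nontrivial]
        intro h
        rw [ringKrullDim_eq_bot_of_subsingleton] at hdim
        exact absurd hdim.symm (by simp)
      obtain ⟨s', hs', g, hg, hi⟩ := noether_dim k (PolyS k n m ⧸ J)
      obtain rfl : s' = δ + 2 := by
        rw [hs'] at hdim
        exact_mod_cast hdim
      obtain ⟨i, j, g', hg'⟩ := choose_chart k n m J hsat (δ + 2) g hg
      obtain ⟨F, hF, h⟩ := lower_T k (Fin (n+1) ⊕ Fin (m+1)) (Texp n m d e) (tz n m d e i j) J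
        (monT k n m d e) (MvPolynomial.X (Sum.inl i) * MvPolynomial.X (Sum.inr j))
        (tz_mon k n m d e i j) _ _ (tz_hmon k n m d e hd he i j) δ (Nat.one_le_iff_ne_zero.mpr hδ) g' hg'
      exact ⟨F, hF, fun _ => ⟨i, j, h⟩⟩
  obtain ⟨F3, hF3, hlow⟩ := hlow
  let F0 : MvPolynomial (Texp n m d e) k := (∏ p, F1 p) * F2 * F3
  have hF0 : F0 ≠ 0 :=
    mul_ne_zero (mul_ne_zero (Finset.prod_ne_zero_iff.mpr fun p _ => hF1 p) hF2) hF3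
  refine ⟨MvPolynomial.rename Subtype.val F0, ?_, ?_, ?_⟩
  · intro h
    apply hF0
    apply MvPolynomial.rename_injective _ Subtype.val_injective
    rw [h, map_zero]
  · intro μ hμ
    have := MvPolynomial.vars_rename Subtype.val F0 hμ
    rw [Finset.mem_image] at this
    obtain ⟨t, _, rfl⟩ := this
    exact t.2
  intro K _ _ f hf hF IK hIK
  rw [MvPolynomial.aeval_rename] at hF
  set u : Texp n m d e → K := fun t => MvPolynomial.coeff t.1 f with hu
  have hF' : MvPolynomial.aeval u F0 ≠ 0 := hF
  simp only [F0, map_mul, map_prod] at hF'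
  have hK3 : MvPolynomial.aeval u F3 ≠ 0 := right_ne_zero_of_mul hF'
  have hK2 : MvPolynomial.aeval u F2 ≠ 0 := right_ne_zero_of_mul (left_ne_zero_of_mul hF')
  have hK1 : ∀ p, MvPolynomial.aeval u (F1 p) ≠ 0 := fun p =>
    Finset.prod_ne_zero_iff.mp (left_ne_zero_of_mul (left_ne_zero_of_mul hF')) p (Finset.mem_univ p)
  have hIsec : Isec k (Fin (n+1) ⊕ Fin (m+1)) (Texp n m d e) K J (monT k n m d e) u = IK := by
    rw [Isec, hIK]
    congr 3
    exact form_eq k K n m d e f hf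
  have hmapw : ∀ i j, MvPolynomial.map (algebraMap k K)
      (MvPolynomial.X (Sum.inl i) * MvPolynomial.X (Sum.inr j) : PolyS k n m) =
      (MvPolynomial.X (Sum.inl i) * MvPolynomial.X (Sum.inr j) : PolyS K n m) := by
    intro i j
    rw [map_mul, MvPolynomial.map_X, MvPolynomial.map_X]
  have hup' := hup K u hK2
  rw [hIsec] at hup'
  constructor
  · intro hδ
    subst hδ
    rw [Ideal.eq_top_iff_one, mem_satIdeal_iff]
    intro i j
    obtain ⟨G, hG, hJG⟩ := hhom
    have hspan : IK = Ideal.span (MvPolynomial.map (algebraMap k K) '' G ∪ {f}) := by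
      rw [hIK, hJG, Ideal.map_span, Ideal.span_union]
    have hdim1 := hup' IK le_rfl
    rw [hspan] at hdim1
    obtain ⟨N, hN⟩ := pow_mem_of_dim K (Fin (n+1) ⊕ Fin (m+1)) (wt n m) _ (by
      rintro g (⟨g, hg, rfl⟩ | hg)
      · obtain ⟨γ, hγ⟩ := hG g hg
        refine ⟨γ, ?_⟩
        intro μ hμ
        rw [MvPolynomial.coeff_map] at hμ
        exact hγ (fun h => hμ (by rw [h, map_zero]))
      · rw [Set.mem_singleton_iff] at hg
        subst hg
        exact ⟨_, hf⟩) (Sum.inl i) (Sum.inr j) rfl rfl hdim1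
    rw [← hspan] at hN
    exact ⟨N, by rwa [mul_one]⟩
  · intro hδ
    constructor
    · apply le_antisymm
      · rintro g ⟨N, hN⟩
        rw [mem_satIdeal_iff] at hN ⊢
        intro i j
        have := hred (i, j) K u (hK1 (i, j)) g N
        rw [hIsec, hmapw] at this
        exact this (hN i j)
      · exact Ideal.le_radical
    · apply le_antisymm
      · apply hup'
        intro g hg
        rw [mem_satIdeal_iff]
        exact fun i j => ⟨0, by rwa [pow_zero, one_mul]⟩
      · obtain ⟨i, j, h⟩ := hlow hδ
        have h1 := h K u hK3 (satIdeal IK (Birr K n m))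
        rw [hIsec, hmapw] at h1
        exact h1 fun g hg => (mem_satIdeal_iff IK g).mp hg i j
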